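/- For all integers k ≥ 3 and r ≥ 2, there exists a real γ = γ(k,r) > 0 such that the following holds: for every η > 0 there is n_0 = n_0(k,r,η) such that for every k-graph H on n ≥ n_0 vertices with n ≡ 0 (mod k), if δ(H) > (max{f(k), g_r(k)} + η)·C(n−1,k−1), then for every r-edge-coloring of E(H) there is a perfect matching of H containing at least (n/(rk))·(1 + γ·η) edges of the same color. -/

import Mathlib

open Finset

def HyperUniform {V : Type*} (k : ℕ) (H : Finset (Finset V)) : Prop := ∀ e ∈ H, e.card = k

def IsPM {V : Type*} [Fintype V] (H M : Finset (Finset V)) : Prop :=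
  M ⊆ H ∧ (∀ e ∈ M, ∀ f ∈ M, e ≠ f → Disjoint e f) ∧ ∀ v : V, ∃ e ∈ M, v ∈ e

def hdeg {V : Type*} [DecidableEq V] (H : Finset (Finset V)) (v : V) : ℕ :=
  (H.filter (fun e => v ∈ e)).card

def IsVec (k r : ℕ) (a : ℕ → ℕ) : Prop :=
  (∀ i j : ℕ, i ≤ j → j < r → a i ≤ a j) ∧ (∑ i ∈ Finset.range r, a i) = k - 1

noncomputable def gfun (k r : ℕ) (a : ℕ → ℕ) : ℝ :=
  (((k - 1).factorial : ℝ) / (∏ i ∈ Finset.range r, ((a i).factorial : ℝ))) *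
    (∏ i ∈ Finset.range r, (((r * a i + 1 : ℕ) : ℝ) / ((r * k : ℕ) : ℝ)) ^ (a i)) *
    (1 + ((a 0 : ℝ) / ((r * a 0 + 1 : ℕ) : ℝ)) *
      ∑ i ∈ Finset.Ico 1 r, ((r * a i + 1 : ℕ) : ℝ) / ((a i + 1 : ℕ) : ℝ))

noncomputable def gThr (k r : ℕ) : ℝ :=
  sSup {x : ℝ | ∃ a : ℕ → ℕ, IsVec k r a ∧ x = gfun k r a}

noncomputable def mThr (k n : ℕ) : ℕ :=
  sInf {m : ℕ | ∀ H : Finset (Finset (Fin n)), HyperUniform k H →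
    (∀ v : Fin n, m ≤ hdeg H v) → ∃ M, IsPM H M}

noncomputable def fThr (k : ℕ) : ℝ :=
  Filter.limsup (fun n : ℕ => (mThr k n : ℝ) / ((n - 1).choose (k - 1) : ℝ))
    (Filter.atTop ⊓ Filter.principal {n : ℕ | k ∣ n})

/-!
A switch for a colour is a pair of matchings on the same few vertices, one with more edges of that
colour than the other. If some colour has linearly many disjoint switches, the remaining vertices
still have a perfect matching, since `δ(H)` exceeds `f(k)`; using all switches in one direction or
in the other gives two perfect matchings that differ linearly in that colour, and then one of the
two has a colour well above the average `n / (rk)`.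

Otherwise a maximal family of disjoint switches covers a small vertex set `W`, and no switch avoids
`W`. As any two vertices have many common links (`f(k) ≥ 5/9 > 1/2`, by a space barrier), this
rigidity partitions the vertices into `r` classes such that an edge avoiding `W` that has colour `i`
meets the classes in `a + e_i` vertices for a fixed vector `a` (plus type), or in `a - e_i` vertices
(minus type). A perfect matching with nearly balanced colours then determines the class sizes, and
hence bounds the degree of some vertex: by about `g_r(k)` for the plus type and for the minus type
with some `a_j = 1`, and by `5/9` for the minus type with all `a_j ≥ 2` and `r ≥ 3`; for `r = 2` the
minus type is a plus type with the two classes exchanged. This contradicts the hypothesis on `δ(H)`.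
-/

/-- The link `N_H(v)` of `v`: the sets `T` with `v ∉ T` and `insert v T ∈ H`. -/
def link {V : Type*} [DecidableEq V] (H : Finset (Finset V)) (v : V) : Finset (Finset V) :=
  {e ∈ H | v ∈ e}.image (·.erase v)

/-- The members of the link of `v` that miss `X`. The vertex `v` itself may lie in `X`. -/
def linkAvoiding {V : Type*} [DecidableEq V] (H : Finset (Finset V)) (X : Finset V) (v : V) :
    Finset (Finset V) :=
  {T ∈ link H v | Disjoint T X}

/-- A matching of `H`: a set of pairwise disjoint edges of `H`. -/
def IsMatching {V : Type*} (H A : Finset (Finset V)) : Prop :=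
  A ⊆ H ∧ (A : Set (Finset V)).PairwiseDisjoint id

section Link

variable {V : Type*} [DecidableEq V] {H : Finset (Finset V)} {k : ℕ} {X T : Finset V} {v : V}

lemma mem_link : T ∈ link H v ↔ v ∉ T ∧ insert v T ∈ H := by
  simp only [link, mem_image, mem_filter]
  constructor
  · rintro ⟨e, ⟨he, hv⟩, rfl⟩
    exact ⟨notMem_erase v e, by rwa [insert_erase hv]⟩
  · rintro ⟨hv, hT⟩
    exact ⟨insert v T, ⟨hT, mem_insert_self v T⟩, erase_insert hv⟩

lemma mem_linkAvoiding : T ∈ linkAvoiding H X v ↔ v ∉ T ∧ insert v T ∈ H ∧ Disjoint T X := by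
  rw [linkAvoiding, mem_filter, mem_link, and_assoc]

lemma card_link (H : Finset (Finset V)) (v : V) : #(link H v) = hdeg H v := by
  refine card_image_of_injOn fun e he f hf hef => ?_
  rw [← insert_erase (mem_filter.1 he).2, ← insert_erase (mem_filter.1 hf).2]
  exact congrArg (insert v) hef

lemma HyperUniform.card_of_mem_link (hH : HyperUniform k H) (hT : T ∈ link H v) :
    #T = k - 1 := by
  obtain ⟨hv, hT⟩ := mem_link.1 hT
  rw [← hH _ hT, card_insert_of_notMem hv, Nat.add_sub_cancel]

lemma HyperUniform.hdeg_le (hH : HyperUniform k H) {S : Finset V} (hS : ∀ e ∈ H, e ⊆ S) (v : V) :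
    hdeg H v ≤ (#S - 1).choose (k - 1) := by
  by_cases hv : v ∈ S
  · rw [← card_link, ← card_erase_of_mem hv, ← card_powersetCard]
    refine card_le_card fun T hT => mem_powersetCard.2 ⟨?_, hH.card_of_mem_link hT⟩
    obtain ⟨hvT, hT⟩ := mem_link.1 hT
    exact subset_erase.2 ⟨(subset_insert v T).trans (hS _ hT), hvT⟩
  · have : hdeg H v = 0 := card_eq_zero.2 (filter_eq_empty_iff.2 fun e he hve => hv (hS e he hve))
    omega

variable [Fintype V]

lemma HyperUniform.hdeg_le_choose_card (hH : HyperUniform k H) (v : V) :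
    hdeg H v ≤ (Fintype.card V - 1).choose (k - 1) :=
  hH.hdeg_le (fun e _ => subset_univ e) v

lemma HyperUniform.hdeg_link_le (hH : HyperUniform k H) (v w : V) :
    hdeg (link H v) w ≤ (Fintype.card V - 2).choose (k - 2) := by
  have hlink : HyperUniform (k - 1) (link H v) := fun T hT => hH.card_of_mem_link hT
  have hsub : ∀ T ∈ link H v, T ⊆ univ.erase v := fun T hT =>
    subset_erase.2 ⟨subset_univ T, (mem_link.1 hT).1⟩
  simpa [Nat.sub_sub] using hlink.hdeg_le hsub w

lemma HyperUniform.hdeg_le_card_linkAvoiding_add (hH : HyperUniform k H) (X : Finset V) (v : V) :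
    hdeg H v ≤ #(linkAvoiding H X v) + #X * (Fintype.card V - 2).choose (k - 2) := by
  have hsub : link H v ⊆ linkAvoiding H X v ∪ X.biUnion fun w => {T ∈ link H v | w ∈ T} := by
    intro T hT
    by_cases hd : Disjoint T X
    · exact mem_union_left _ (mem_filter.2 ⟨hT, hd⟩)
    · obtain ⟨w, hwT, hwX⟩ := not_disjoint_iff.1 hd
      exact mem_union_right _ (mem_biUnion.2 ⟨w, hwX, mem_filter.2 ⟨hT, hwT⟩⟩)
  calc hdeg H v = #(link H v) := (card_link H v).symm
    _ ≤ _ := (card_le_card hsub).trans (card_union_le _ _)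
    _ ≤ _ := by
      gcongr
      exact card_biUnion_le_card_mul _ _ _ fun w _ => hH.hdeg_link_le v w

lemma mul_choose_sub_two_le {n k : ℕ} (hk : 2 ≤ k) (hkn : k ≤ n) :
    n * (n - 2).choose (k - 2) ≤ k * (n - 1).choose (k - 1) := by
  obtain ⟨m, rfl⟩ := Nat.exists_eq_add_of_le' (hk.trans hkn)
  obtain ⟨j, rfl⟩ := Nat.exists_eq_add_of_le' hk
  have habsorb : (m + 1) * m.choose j = (m + 1).choose (j + 1) * (j + 1) :=
    Nat.add_one_mul_choose_eq m j
  have hle : m.choose j ≤ (m + 1).choose (j + 1) := by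
    rw [Nat.choose_succ_succ]; exact Nat.le_add_right _ _
  simp only [Nat.add_sub_cancel, Nat.add_succ_sub_one]
  linarith

lemma HyperUniform.lt_card_linkAvoiding (hH : HyperUniform k H) (hk : 2 ≤ k)
    (hkV : k ≤ Fintype.card V) {D β : ℝ}
    (hD : D * ((Fintype.card V - 1).choose (k - 1) : ℝ) < hdeg H v)
    (hX : (#X : ℝ) ≤ β * Fintype.card V) :
    (D - k * β) * ((Fintype.card V - 1).choose (k - 1) : ℝ) < #(linkAvoiding H X v) := by
  set n := Fintype.card V
  have hdeg_le : (hdeg H v : ℝ) ≤ #(linkAvoiding H X v) + #X * ((n - 2).choose (k - 2) : ℝ) :=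
    mod_cast hH.hdeg_le_card_linkAvoiding_add X v
  have hn : (0 : ℝ) < n := mod_cast (by omega : 0 < n)
  have hβ : 0 ≤ β := nonneg_of_mul_nonneg_left ((Nat.cast_nonneg _).trans hX) hn
  have hloss : #X * ((n - 2).choose (k - 2) : ℝ) ≤ β * (k * ((n - 1).choose (k - 1) : ℝ)) :=
    calc #X * ((n - 2).choose (k - 2) : ℝ) ≤ β * n * ((n - 2).choose (k - 2) : ℝ) := by gcongr
      _ = β * (n * ((n - 2).choose (k - 2) : ℝ)) := mul_assoc _ _ _
      _ ≤ _ := mul_le_mul_of_nonneg_left (mod_cast mul_choose_sub_two_le hk hkV) hβ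
  linarith

end Link

section Matching

variable {V : Type*} {H M A : Finset (Finset V)} {k : ℕ}

lemma card_le_of_pairwiseDisjoint_of_not_disjoint {X : Finset V}
    (hM : (M : Set (Finset V)).PairwiseDisjoint id) (hX : ∀ e ∈ M, ¬ Disjoint e X) :
    #M ≤ #X := by
  classical
  have hdisj : (M : Set (Finset V)).PairwiseDisjoint (· ∩ X) := fun e he f hf hef =>
    (hM he hf hef).mono inter_subset_left inter_subset_left
  calc #M = ∑ _e ∈ M, 1 := card_eq_sum_ones M
    _ ≤ ∑ e ∈ M, #(e ∩ X) := sum_le_sum fun e he =>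
      card_pos.2 (nonempty_iff_ne_empty.2 fun h => hX e he (disjoint_iff_inter_eq_empty.2 h))
    _ = #(M.biUnion (· ∩ X)) := (card_biUnion hdisj).symm
    _ ≤ #X := card_le_card (biUnion_subset.2 fun e _ => inter_subset_right)

lemma IsMatching.card_biUnion [DecidableEq V] (hA : IsMatching H A) (hH : HyperUniform k H) :
    #(A.biUnion id) = #A * k := by
  rw [Finset.card_biUnion hA.2]
  exact sum_const_nat fun e he => hH e (hA.1 he)

variable [Fintype V]

lemma IsPM.isMatching (hM : IsPM H M) : IsMatching H M :=
  ⟨hM.1, fun e he f hf => hM.2.1 e he f hf⟩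

lemma IsPM.biUnion_eq_univ [DecidableEq V] (hM : IsPM H M) : M.biUnion id = univ :=
  eq_univ_of_forall fun v => mem_biUnion.2 (hM.2.2 v)

lemma IsPM.card_mul (hM : IsPM H M) (hH : HyperUniform k H) : #M * k = Fintype.card V := by
  classical
  rw [← hM.isMatching.card_biUnion hH, hM.biUnion_eq_univ, card_univ]

lemma IsPM.card_not_disjoint_le [DecidableEq V] (hM : IsPM H M) (W : Finset V) :
    #{e ∈ M | ¬ Disjoint e W} ≤ #W :=
  card_le_of_pairwiseDisjoint_of_not_disjoint
    (hM.isMatching.2.subset (coe_subset.2 (filter_subset _ M))) fun _ he => (mem_filter.1 he).2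

end Matching

section Asymptotics

open Filter Asymptotics

lemma eventually_pow_div_factorial_le (m : ℕ) {ε : ℝ} (hε : 0 < ε) :
    ∀ᶠ n : ℕ in atTop, (n : ℝ) ^ m / m.factorial ≤ (1 + ε) * ((n - 1).choose m : ℝ) := by
  have hcast : (fun n : ℕ => ((n - 1 : ℕ) : ℝ)) ~[atTop] fun n : ℕ => (n : ℝ) := by
    refine (isEquivalent_of_tendsto_one ?_).symm
    rw [← tendsto_add_atTop_iff_nat 1]
    have h : Tendsto (fun n : ℕ => 1 + 1 / (n : ℝ)) atTop (nhds (1 + 0)) :=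
      tendsto_one_div_atTop_nhds_zero_nat.const_add 1
    rw [add_zero] at h
    refine h.congr' ((eventually_ne_atTop 0).mono fun n hn => ?_)
    have : (n : ℝ) ≠ 0 := mod_cast hn
    simp only [Pi.div_apply, Nat.add_sub_cancel, Nat.cast_add_one]
    field_simp
  have hchoose : (fun n : ℕ => (n : ℝ) ^ m / m.factorial) ~[atTop]
      fun n : ℕ => ((n - 1).choose m : ℝ) :=
    (((isEquivalent_choose m).comp_tendsto (tendsto_sub_atTop_nat 1)).trans
      ((hcast.pow m).div IsEquivalent.refl)).symm
  obtain ⟨φ, hφ, heq⟩ := hchoose.exists_eq_mul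
  filter_upwards [heq, hφ.eventually_le_const (lt_add_of_pos_right 1 hε)] with n hn hφn
  rw [hn]
  exact mul_le_mul_of_nonneg_right hφn (Nat.cast_nonneg _)

lemma one_sub_one_div_add_one_pow_le {m : ℕ} (hm : 2 ≤ m) :
    (1 - 1 / ((m : ℝ) + 1)) ^ m ≤ 4 / 9 := by
  have hm' : (2 : ℝ) ≤ m := mod_cast hm
  -- Bernoulli with exponent `m / 2 ≥ 1` gives `(1 + 1 / m) ^ (m / 2) ≥ 3 / 2`.
  have hsqrt : 3 / 2 ≤ (1 + 1 / (m : ℝ)) ^ ((m : ℝ) / 2) := by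
    have h := one_add_mul_self_le_rpow_one_add (s := 1 / (m : ℝ)) (p := m / 2)
      (by linarith [show (0 : ℝ) ≤ 1 / m by positivity]) (by linarith)
    have hhalf : (m : ℝ) / 2 * (1 / m) = 1 / 2 := by field_simp
    linarith
  have hpow : 9 / 4 ≤ (1 + 1 / (m : ℝ)) ^ m :=
    calc (9 / 4 : ℝ) = (3 / 2) ^ 2 := by norm_num
      _ ≤ ((1 + 1 / (m : ℝ)) ^ ((m : ℝ) / 2)) ^ 2 := by gcongr
      _ = (1 + 1 / (m : ℝ)) ^ m := by
        rw [← Real.rpow_natCast, ← Real.rpow_mul (by positivity), ← Real.rpow_natCast]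
        congr 1
        push_cast
        ring
  have hinv : 1 - 1 / ((m : ℝ) + 1) = (1 + 1 / (m : ℝ))⁻¹ := by field_simp; ring
  rw [hinv, inv_pow, inv_le_comm₀ (by positivity) (by norm_num)]
  linarith

end Asymptotics

section Threshold

open Filter

variable {k n : ℕ}

lemma exists_isPM_of_choose_lt (hn : 0 < n) {H : Finset (Finset (Fin n))} (hH : HyperUniform k H)
    (hd : ∀ v, (n - 1).choose (k - 1) + 1 ≤ hdeg H v) : ∃ M, IsPM H M := by
  have h := (hd ⟨0, hn⟩).trans (hH.hdeg_le_choose_card _)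
  rw [Fintype.card_fin] at h
  omega

lemma mThr_le (hn : 0 < n) : mThr k n ≤ (n - 1).choose (k - 1) + 1 :=
  Nat.sInf_le fun _ hH hd => exists_isPM_of_choose_lt hn hH hd

lemma exists_isPM_of_mThr_le (hn : 0 < n) {H : Finset (Finset (Fin n))} (hH : HyperUniform k H)
    (hd : ∀ v, mThr k n ≤ hdeg H v) : ∃ M, IsPM H M := by
  have hmem : mThr k n ∈ {m : ℕ | ∀ H : Finset (Finset (Fin n)), HyperUniform k H →
      (∀ v, m ≤ hdeg H v) → ∃ M, IsPM H M} :=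
    Nat.sInf_mem ⟨_, fun _ hH hd => exists_isPM_of_choose_lt hn hH hd⟩
  exact hmem H hH hd

lemma isBoundedUnder_mThr_div_choose (k : ℕ) :
    (atTop ⊓ 𝓟 {n : ℕ | k ∣ n}).IsBoundedUnder (· ≤ ·)
      (fun n : ℕ => (mThr k n : ℝ) / ((n - 1).choose (k - 1) : ℝ)) := by
  refine ⟨2, eventually_map.2 (Eventually.filter_mono inf_le_left ?_)⟩
  filter_upwards [eventually_ge_atTop (k + 1)] with n hn
  have hpos : 0 < (n - 1).choose (k - 1) := Nat.choose_pos (by omega)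
  have hle : mThr k n ≤ (n - 1).choose (k - 1) + 1 := mThr_le (by omega)
  rw [div_le_iff₀ (mod_cast hpos)]
  exact_mod_cast (by omega)

lemma eventually_exists_isPM (k : ℕ) {η : ℝ} (hη : 0 < η) :
    ∀ᶠ n : ℕ in atTop, k ∣ n → ∀ H : Finset (Finset (Fin n)), HyperUniform k H →
      (∀ v, (fThr k + η) * ((n - 1).choose (k - 1) : ℝ) ≤ hdeg H v) → ∃ M, IsPM H M := by
  have hlt := eventually_lt_of_limsup_lt (show fThr k < fThr k + η by linarith)
    (isBoundedUnder_mThr_div_choose k)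
  filter_upwards [eventually_inf_principal.1 hlt, eventually_ge_atTop (k + 1)]
    with n hn hkn hdvd H hH hd
  have hpos : 0 < (n - 1).choose (k - 1) := Nat.choose_pos (by omega)
  refine exists_isPM_of_mThr_le (by omega) hH fun v => ?_
  have hmThr := (div_lt_iff₀ (mod_cast hpos)).1 (hn hdvd)
  exact_mod_cast (hmThr.trans_le (hd v)).le

end Threshold

section SpaceBarrier

variable {V : Type*} [Fintype V] [DecidableEq V] {k : ℕ} {A : Finset V}

/-- The space barrier on `A`: all `k`-sets that meet `A`. A perfect matching needs at least
`card V / k` vertices in `A`. -/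
def spaceBarrier (k : ℕ) (A : Finset V) : Finset (Finset V) :=
  {e ∈ univ.powersetCard k | ¬ Disjoint e A}

lemma hyperUniform_spaceBarrier (k : ℕ) (A : Finset V) : HyperUniform k (spaceBarrier k A) :=
  fun _ he => (mem_powersetCard.1 (mem_filter.1 he).1).2

lemma IsPM.card_le_of_spaceBarrier {M : Finset (Finset V)} (hM : IsPM (spaceBarrier k A) M) :
    Fintype.card V ≤ #A * k := by
  rw [← hM.card_mul (hyperUniform_spaceBarrier k A)]
  exact Nat.mul_le_mul_right k (card_le_of_pairwiseDisjoint_of_not_disjoint hM.isMatching.2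
    fun e he => (mem_filter.1 (hM.1 he)).2)

lemma choose_le_hdeg_spaceBarrier_add (hk : 1 ≤ k) (A : Finset V) (v : V) :
    (Fintype.card V - 1).choose (k - 1) ≤
      hdeg (spaceBarrier k A) v + (Fintype.card V - (#A + 1)).choose (k - 1) := by
  have hsub : {T ∈ (univ.erase v).powersetCard (k - 1) | ¬ Disjoint (insert v T) A} ⊆
      link (spaceBarrier k A) v := by
    intro T hT
    obtain ⟨hT, hTA⟩ := mem_filter.1 hT
    obtain ⟨hTv, hTk⟩ := mem_powersetCard.1 hT
    have hvT : v ∉ T := (subset_erase.1 hTv).2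
    refine mem_link.2 ⟨hvT, mem_filter.2 ⟨mem_powersetCard.2 ⟨subset_univ _, ?_⟩, hTA⟩⟩
    rw [card_insert_of_notMem hvT]
    omega
  have hmiss : #{T ∈ (univ.erase v).powersetCard (k - 1) | Disjoint (insert v T) A} ≤
      (Fintype.card V - (#A + 1)).choose (k - 1) := by
    by_cases hvA : v ∈ A
    · rw [filter_false_of_mem fun T _ h => disjoint_left.1 h (mem_insert_self v T) hvA]
      exact Nat.zero_le _
    · rw [← card_insert_of_notMem hvA, ← card_compl, ← card_powersetCard]
      refine card_le_card fun T hT => ?_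
      obtain ⟨hT, hTA⟩ := mem_filter.1 hT
      obtain ⟨hTv, hTk⟩ := mem_powersetCard.1 hT
      refine mem_powersetCard.2 ⟨subset_compl_iff_disjoint_right.2 ?_, hTk⟩
      exact disjoint_insert_right.2 ⟨(subset_erase.1 hTv).2, (disjoint_insert_left.1 hTA).2⟩
  rw [← card_link, ← card_univ, ← card_erase_of_mem (mem_univ v), ← card_powersetCard,
    ← card_filter_add_card_filter_not (fun T => Disjoint (insert v T) A), add_comm]
  exact add_le_add (card_le_card hsub) hmiss

lemma choose_le_mThr_add_choose {t : ℕ} (hk : 1 ≤ k) (ht : 1 ≤ t) :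
    (k * t - 1).choose (k - 1) ≤ mThr k (k * t) + (k * t - t).choose (k - 1) := by
  obtain ⟨A, -, hA⟩ := exists_subset_card_eq (s := (univ : Finset (Fin (k * t)))) (n := t - 1)
    (by
      rw [card_univ, Fintype.card_fin]
      exact (Nat.sub_le t 1).trans (Nat.le_mul_of_pos_left t hk))
  by_contra! hlt
  obtain ⟨M, hM⟩ := exists_isPM_of_mThr_le (Nat.mul_pos hk ht) (hyperUniform_spaceBarrier k A)
    fun v => by
      have h := choose_le_hdeg_spaceBarrier_add hk A v
      rw [Fintype.card_fin, hA, Nat.sub_add_cancel ht] at h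
      omega
  have hcard := hM.card_le_of_spaceBarrier
  rw [Fintype.card_fin, hA, mul_comm] at hcard
  have := Nat.le_of_mul_le_mul_right hcard hk
  omega

end SpaceBarrier

section ThresholdLowerBound

open Filter

lemma sub_le_mThr_div_choose {k t : ℕ} {ε : ℝ} (hk : 3 ≤ k) (ht : 1 ≤ t) (hε : 0 ≤ ε)
    (hpow : ((k * t : ℕ) : ℝ) ^ (k - 1) / (k - 1).factorial ≤
      (1 + ε) * ((k * t - 1).choose (k - 1) : ℝ)) :
    5 / 9 - ε ≤ (mThr k (k * t) : ℝ) / ((k * t - 1).choose (k - 1) : ℝ) := by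
  have hk1 : ((k - 1 : ℕ) : ℝ) + 1 = k := by rw [Nat.cast_pred (by omega)]; ring
  have hratio : ((k * t - t : ℕ) : ℝ) = (k * t : ℕ) * (1 - 1 / (((k - 1 : ℕ) : ℝ) + 1)) := by
    have : (k : ℝ) ≠ 0 := mod_cast (by omega)
    rw [hk1, Nat.cast_sub (Nat.le_mul_of_pos_left t (by omega))]
    push_cast
    field_simp
  have hkt : k ≤ k * t := Nat.le_mul_of_pos_right k ht
  have hC : (0 : ℝ) < (k * t - 1).choose (k - 1) := mod_cast Nat.choose_pos (by omega)
  have hmiss : ((k * t - t).choose (k - 1) : ℝ) ≤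
      (1 + ε) * ((k * t - 1).choose (k - 1) : ℝ) * (4 / 9) :=
    calc ((k * t - t).choose (k - 1) : ℝ)
        ≤ ((k * t - t : ℕ) : ℝ) ^ (k - 1) / (k - 1).factorial := Nat.choose_le_pow_div _ _
      _ = ((k * t : ℕ) : ℝ) ^ (k - 1) / (k - 1).factorial *
          (1 - 1 / (((k - 1 : ℕ) : ℝ) + 1)) ^ (k - 1) := by rw [hratio, mul_pow]; ring
      _ ≤ (1 + ε) * ((k * t - 1).choose (k - 1) : ℝ) * (4 / 9) :=
        mul_le_mul hpow (one_sub_one_div_add_one_pow_le (by omega))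
          (pow_nonneg (by rw [hk1, sub_nonneg, div_le_one] <;> norm_cast <;> omega) _)
          (by positivity)
  have hbarrier : ((k * t - 1).choose (k - 1) : ℝ) ≤
      mThr k (k * t) + ((k * t - t).choose (k - 1) : ℝ) := by
    exact_mod_cast choose_le_mThr_add_choose (by omega) ht
  rw [le_div_iff₀ hC]
  nlinarith

lemma five_ninths_le_fThr {k : ℕ} (hk : 3 ≤ k) : 5 / 9 ≤ fThr k := by
  refine le_of_forall_sub_le fun ε hε => ?_
  have htend : Tendsto (fun t => k * t) atTop (atTop ⊓ 𝓟 {n : ℕ | k ∣ n}) :=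
    tendsto_inf.2 ⟨tendsto_id.const_mul_atTop' (by omega),
      tendsto_principal.2 (.of_forall fun t => dvd_mul_right k t)⟩
  refine le_limsup_of_frequently_le (htend.frequently (Eventually.frequently ?_))
    (isBoundedUnder_mThr_div_choose k)
  filter_upwards [htend.eventually ((eventually_pow_div_factorial_le (k - 1) hε).filter_mono
    inf_le_left), eventually_ge_atTop 1] with t hpow ht
  exact sub_le_mThr_div_choose hk ht hε.le hpow

end ThresholdLowerBound

/-- The number of elements of `s` in each fibre of `f`. For an edge-colouring `c` this is the colour
vector of a set of edges; for a partition `cl` of the vertices it is the type of a vertex set. -/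
def profile {α ι : Type*} [DecidableEq ι] (f : α → ι) (s : Finset α) (i : ι) : ℕ :=
  #{x ∈ s | f x = i}

/-- The sets that belong to the links of both `u` and `v` and miss `X`. -/
def commonLinks {V : Type*} [DecidableEq V] (H : Finset (Finset V)) (X : Finset V) (u v : V) :
    Finset (Finset V) :=
  linkAvoiding H X u ∩ linkAvoiding H X v

/-- A switch for colour `i`: two matchings of `H` on the same set of at most `k * (k + 1)` vertices,
the second with more edges of colour `i` than the first. -/
structure IsSwitch {V ι : Type*} [DecidableEq V] [DecidableEq ι] (k : ℕ) (H : Finset (Finset V))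
    (c : Finset V → ι) (i : ι) (p : Finset (Finset V) × Finset (Finset V)) : Prop where
  isMatching_fst : IsMatching H p.1
  isMatching_snd : IsMatching H p.2
  biUnion_eq : p.1.biUnion id = p.2.biUnion id
  card_biUnion_le : #(p.1.biUnion id) ≤ k * (k + 1)
  profile_lt : profile c p.1 i < profile c p.2 i

/-- The hypergraph induced by `H` on the domain of `φ`. -/
def pullback {U V : Type*} [Fintype U] [DecidableEq V] (φ : U ↪ V) (H : Finset (Finset V)) :
    Finset (Finset U) :=
  {e | e.map φ ∈ H}

section Profile

variable {α ι : Type*} [DecidableEq ι] (f : α → ι) {s t : Finset α}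

lemma profile_singleton (x : α) (i : ι) : profile f {x} i = if f x = i then 1 else 0 := by
  rw [profile, filter_singleton]
  split_ifs <;> rfl

lemma sum_profile [Fintype ι] (s : Finset α) : ∑ i, profile f s i = #s :=
  (card_eq_sum_card_fiberwise fun _ _ => mem_coe.2 (mem_univ _)).symm

lemma sub_mul_le_profile [Fintype ι] (s : Finset α) {x : ℝ} (hx : ∀ j, (profile f s j : ℝ) ≤ x)
    (i : ι) : (#s : ℝ) - (Fintype.card ι - 1) * x ≤ profile f s i := by
  have hsum : (profile f s i : ℝ) + ∑ j ∈ univ.erase i, (profile f s j : ℝ) = #s := by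
    exact_mod_cast (add_sum_erase univ (profile f s) (mem_univ i)).trans (sum_profile f s)
  have hrest : ∑ j ∈ univ.erase i, (profile f s j : ℝ) ≤ (Fintype.card ι - 1) * x := by
    refine (sum_le_card_nsmul _ _ x fun j _ => hx j).trans_eq ?_
    rw [card_erase_of_mem (mem_univ i), card_univ, nsmul_eq_mul,
      Nat.cast_pred (Fintype.card_pos_iff.2 ⟨i⟩)]
  linarith

variable [DecidableEq α]

lemma profile_union (hst : Disjoint s t) (i : ι) :
    profile f (s ∪ t) i = profile f s i + profile f t i := by
  rw [profile, filter_union, card_union_of_disjoint (disjoint_filter_filter hst)]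
  rfl

lemma profile_insert {x : α} (hx : x ∉ s) (i : ι) :
    profile f (insert x s) i = profile f s i + if f x = i then 1 else 0 := by
  rw [insert_eq, profile_union f (disjoint_singleton_left.2 hx), profile_singleton, add_comm]

lemma profile_biUnion {β : Type*} {F : Finset β} {g : β → Finset α}
    (hg : (F : Set β).PairwiseDisjoint g) (i : ι) :
    profile f (F.biUnion g) i = ∑ p ∈ F, profile f (g p) i := by
  rw [profile, filter_biUnion]
  exact card_biUnion fun p hp q hq hpq => disjoint_filter_filter (hg hp hq hpq)

end Profile

lemma exists_pairwiseDisjoint_card_eq_or_maximal {α V : Type*} [DecidableEq V] (P : α → Prop)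
    (s : α → Finset V) (hne : ∀ p, P p → (s p).Nonempty) (N : ℕ) :
    ∃ F : Finset α, (∀ p ∈ F, P p) ∧ (F : Set α).PairwiseDisjoint s ∧
      (#F = N ∨ #F < N ∧ ∀ p, P p → ¬ Disjoint (s p) (F.biUnion s)) := by
  classical
  induction N with
  | zero => exact ⟨∅, by simp⟩
  | succ N ih =>
    obtain ⟨F, hP, hd, hF | ⟨hF, hmax⟩⟩ := ih
    · by_cases h : ∃ p, P p ∧ Disjoint (s p) (F.biUnion s)
      · obtain ⟨p, hp, hpF⟩ := h
        rw [disjoint_biUnion_right] at hpF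
        have hpmem : p ∉ F := fun h => (hne p hp).ne_empty (disjoint_self.1 (hpF p h))
        refine ⟨insert p F, forall_mem_insert _ _ _ |>.2 ⟨hp, hP⟩, ?_,
          .inl (by rw [card_insert_of_notMem hpmem, hF])⟩
        rw [coe_insert]
        exact hd.insert fun q hq _ => hpF q hq
      · push Not at h
        exact ⟨F, hP, hd, .inr ⟨by omega, h⟩⟩
    · exact ⟨F, hP, hd, .inr ⟨by omega, hmax⟩⟩

section Gluing

variable {V : Type*} [DecidableEq V] {H A B : Finset (Finset V)} {k : ℕ}

lemma IsMatching.isPM [Fintype V] (hA : IsMatching H A) (hcover : A.biUnion id = univ) :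
    IsPM H A :=
  ⟨hA.1, fun e he f hf => hA.2 he hf, fun v => by simpa using hcover.symm.subset (mem_univ v)⟩

lemma IsMatching.union (hA : IsMatching H A) (hB : IsMatching H B)
    (hAB : Disjoint (A.biUnion id) (B.biUnion id)) : IsMatching H (A ∪ B) := by
  refine ⟨union_subset hA.1 hB.1, ?_⟩
  rw [coe_union, Set.pairwiseDisjoint_union]
  exact ⟨hA.2, hB.2, fun e he f hf _ =>
    hAB.mono (subset_biUnion_of_mem id he) (subset_biUnion_of_mem id hf)⟩

lemma IsMatching.biUnion {α : Type*} {F : Finset α} {g : α → Finset (Finset V)}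
    (hg : ∀ p ∈ F, IsMatching H (g p))
    (hF : (F : Set α).PairwiseDisjoint fun p => (g p).biUnion id) :
    IsMatching H (F.biUnion g) := by
  refine ⟨biUnion_subset.2 fun p hp => (hg p hp).1, ?_⟩
  rw [coe_biUnion]
  refine Set.PairwiseDisjoint.biUnion_finset ?_ fun p hp => (hg p hp).2
  simpa only [sup_eq_biUnion] using hF

lemma HyperUniform.disjoint_of_disjoint_biUnion (hH : HyperUniform k H) (hk : 1 ≤ k) (hA : A ⊆ H)
    (hAB : Disjoint (A.biUnion id) (B.biUnion id)) : Disjoint A B := by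
  refine disjoint_left.2 fun e heA heB => ?_
  have he : e = ∅ := disjoint_self.1
    (hAB.mono (subset_biUnion_of_mem id heA) (subset_biUnion_of_mem id heB))
  have := hH e (hA heA)
  rw [he, card_empty] at this
  omega

variable {ι : Type*} [DecidableEq ι] [Fintype V]

lemma isPM_union_biUnion {α : Type*} (hH : HyperUniform k H) (hk : 1 ≤ k) (c : Finset V → ι)
    {F : Finset α} {g : α → Finset (Finset V)} {M₀ : Finset (Finset V)}
    (hg : ∀ p ∈ F, IsMatching H (g p))
    (hF : (F : Set α).PairwiseDisjoint fun p => (g p).biUnion id) (hM₀ : IsMatching H M₀)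
    (hcover : M₀.biUnion id = (F.biUnion fun p => (g p).biUnion id)ᶜ) :
    IsPM H (M₀ ∪ F.biUnion g) ∧ ∀ i, profile c (M₀ ∪ F.biUnion g) i =
      profile c M₀ i + ∑ p ∈ F, profile c (g p) i := by
  have hblocks : (F.biUnion g).biUnion id = F.biUnion fun p => (g p).biUnion id :=
    biUnion_biUnion ..
  have hdisj : Disjoint (M₀.biUnion id) ((F.biUnion g).biUnion id) := by
    rw [hblocks, hcover]
    exact disjoint_compl_left
  refine ⟨(hM₀.union (.biUnion hg hF) hdisj).isPM ?_, fun i => ?_⟩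
  · rw [union_biUnion, hblocks, hcover, union_comm, union_compl]
  · rw [profile_union c (hH.disjoint_of_disjoint_biUnion hk hM₀.1 hdisj), profile_biUnion]
    exact fun p hp q hq hpq =>
      hH.disjoint_of_disjoint_biUnion hk (hg p hp).1 (hF hp hq hpq)

lemma exists_isPM_profile_add_card_le (hH : HyperUniform k H) (hk : 1 ≤ k) {c : Finset V → ι}
    {i : ι} {F : Finset (Finset (Finset V) × Finset (Finset V))}
    (hF : ∀ p ∈ F, IsSwitch k H c i p)
    (hd : (F : Set (Finset (Finset V) × Finset (Finset V))).PairwiseDisjoint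
      fun p => p.1.biUnion id) {M₀ : Finset (Finset V)}
    (hM₀ : IsMatching H M₀) (hcover : M₀.biUnion id = (F.biUnion fun p => p.1.biUnion id)ᶜ) :
    ∃ M M', IsPM H M ∧ IsPM H M' ∧ profile c M i + #F ≤ profile c M' i := by
  have hblocks : ∀ p ∈ F, p.1.biUnion id = p.2.biUnion id := fun p hp => (hF p hp).biUnion_eq
  have hd' : (F : Set (Finset (Finset V) × Finset (Finset V))).PairwiseDisjoint
      fun p => p.2.biUnion id := fun p hp q hq hpq => by
    simpa only [Function.onFun, hblocks p hp, hblocks q hq] using hd hp hq hpq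
  obtain ⟨hfst, hfst_profile⟩ := isPM_union_biUnion hH hk c
    (fun p hp => (hF p hp).isMatching_fst) hd hM₀ hcover
  obtain ⟨hsnd, hsnd_profile⟩ := isPM_union_biUnion hH hk c
    (fun p hp => (hF p hp).isMatching_snd) hd' hM₀ (by rw [hcover, biUnion_congr rfl hblocks])
  refine ⟨_, _, hfst, hsnd, ?_⟩
  rw [hfst_profile, hsnd_profile, add_assoc, card_eq_sum_ones, ← sum_add_distrib]
  gcongr with p hp
  exact (hF p hp).profile_lt

end Gluing

section Pullback

variable {U V : Type*} [Fintype U] [DecidableEq V] {φ : U ↪ V} {H : Finset (Finset V)}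

lemma hyperUniform_pullback {k : ℕ} (hH : HyperUniform k H) : HyperUniform k (pullback φ H) :=
  fun e he => by rw [← hH _ (mem_filter.1 he).2, card_map]

lemma IsPM.map_of_pullback {M : Finset (Finset U)} (hM : IsPM (pullback φ H) M) :
    IsMatching H (M.image (map φ)) ∧ (M.image (map φ)).biUnion id = univ.map φ := by
  refine ⟨⟨?_, ?_⟩, ?_⟩
  · exact image_subset_iff.2 fun e he => (mem_filter.1 (hM.1 he)).2
  · rw [coe_image]
    rintro _ ⟨e, he, rfl⟩ _ ⟨f, hf, rfl⟩ hef
    exact (disjoint_map φ).2 (hM.2.1 e he f hf (ne_of_apply_ne _ hef))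
  · ext x
    simp only [mem_biUnion, mem_image, id, mem_map, mem_univ, true_and, exists_exists_and_eq_and]
    exact ⟨fun ⟨_, _, y, _, hy⟩ => ⟨y, hy⟩, fun ⟨y, hy⟩ =>
      let ⟨e, he, hye⟩ := hM.2.2 y
      ⟨e, he, y, hye, hy⟩⟩

variable [DecidableEq U] [Fintype V]

lemma card_linkAvoiding_le_hdeg_pullback {S : Finset V} (hS : univ.map φ = Sᶜ) (u : U) :
    #(linkAvoiding H S (φ u)) ≤ hdeg (pullback φ H) u := by
  rw [← card_link]
  refine (card_le_card (t := (link (pullback φ H) u).image (map φ)) fun T hT => ?_).trans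
    card_image_le
  obtain ⟨huT, hTH, hTS⟩ := mem_linkAvoiding.1 hT
  obtain ⟨T, -, rfl⟩ := subset_map_iff.1 (hS ▸ subset_compl_iff_disjoint_right.2 hTS)
  rw [mem_map'] at huT
  exact mem_image_of_mem _ (mem_link.2
    ⟨huT, mem_filter.2 ⟨mem_univ _, by rwa [map_insert]⟩⟩)

lemma HyperUniform.exists_isMatching_biUnion_eq_compl {k : ℕ} (hH : HyperUniform k H)
    {S : Finset V} {d : ℝ}
    (hPM : ∀ H' : Finset (Finset (Fin #Sᶜ)), HyperUniform k H' → (∀ v, d ≤ hdeg H' v) →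
      ∃ M, IsPM H' M)
    (hd : ∀ v ∉ S, d ≤ #(linkAvoiding H S v)) :
    ∃ M, IsMatching H M ∧ M.biUnion id = Sᶜ := by
  set φ : Fin #Sᶜ ↪ V := Sᶜ.equivFin.symm.toEmbedding.trans (.subtype _)
  have hφ : univ.map φ = Sᶜ := by
    rw [← map_map, map_univ_equiv, univ_eq_attach, attach_map_val]
  have hφS : ∀ u, φ u ∉ S := fun u => mem_compl.1 (hφ.subset (mem_map_of_mem φ (mem_univ u)))
  obtain ⟨M, hM⟩ := hPM (pullback φ H) (hyperUniform_pullback hH) fun u =>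
    (hd (φ u) (hφS u)).trans (mod_cast card_linkAvoiding_le_hdeg_pullback hφ u)
  exact ⟨_, hM.map_of_pullback.1, hM.map_of_pullback.2.trans hφ⟩

end Pullback

lemma HyperUniform.commonLinks_nonempty {V : Type*} [Fintype V] [DecidableEq V] {k : ℕ}
    {H : Finset (Finset V)} (hH : HyperUniform k H) {X : Finset V} {u v : V}
    (hu : (Fintype.card V - 1).choose (k - 1) < 2 * #(linkAvoiding H (insert v X) u))
    (hv : (Fintype.card V - 1).choose (k - 1) < 2 * #(linkAvoiding H (insert u X) v)) :
    (commonLinks H X u v).Nonempty := by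
  have hcard : #((univ.erase v).powersetCard (k - 1)) = (Fintype.card V - 1).choose (k - 1) := by
    rw [card_powersetCard, card_erase_of_mem (mem_univ v), card_univ]
  have hsub : ∀ {w x : V} {T}, T ∈ linkAvoiding H (insert x X) w →
      T ∈ linkAvoiding H X w ∧ w ∉ T ∧ x ∉ T ∧ #T = k - 1 := by
    intro w x T hT
    obtain ⟨hwT, hTH, hTX⟩ := mem_linkAvoiding.1 hT
    rw [disjoint_insert_right] at hTX
    exact ⟨mem_linkAvoiding.2 ⟨hwT, hTH, hTX.2⟩, hwT, hTX.1,
      hH.card_of_mem_link (mem_link.2 ⟨hwT, hTH⟩)⟩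
  obtain ⟨T, hT⟩ := inter_nonempty_of_card_lt_card_add_card
    (s := (univ.erase v).powersetCard (k - 1))
    (fun T hT => mem_powersetCard.2 ⟨subset_erase.2 ⟨subset_univ _, (hsub hT).2.2.1⟩,
      (hsub hT).2.2.2⟩)
    (fun T hT => mem_powersetCard.2 ⟨subset_erase.2 ⟨subset_univ _, (hsub hT).2.1⟩,
      (hsub hT).2.2.2⟩)
    (show #((univ.erase v).powersetCard (k - 1)) <
      #(linkAvoiding H (insert v X) u) + #(linkAvoiding H (insert u X) v) by
        omega)
  obtain ⟨hTu, hTv⟩ := mem_inter.1 hT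
  exact ⟨T, mem_inter.2 ⟨(hsub hTu).1, (hsub hTv).1⟩⟩

/-- The weight `w` gives the same total to any two matchings of `H` that avoid `W` and cover the
same set of at most `k * (k + 1)` vertices. -/
def IsSwitchInvariant {V G : Type*} [DecidableEq V] [AddCommGroup G] (k : ℕ)
    (H : Finset (Finset V)) (W : Finset V) (w : Finset V → G) : Prop :=
  ∀ A B, IsMatching H A → IsMatching H B → A.biUnion id = B.biUnion id →
    Disjoint (A.biUnion id) W → #(A.biUnion id) ≤ k * (k + 1) → ∑ e ∈ A, w e = ∑ e ∈ B, w e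

/-- Any two vertices have a common link set outside `W` and any further set of at most `4 * k ^ 2`
vertices; this is the room needed to choose all the link sets of one switch disjointly. -/
def HasCommonLinks {V : Type*} [DecidableEq V] (k : ℕ) (H : Finset (Finset V)) (W : Finset V) :
    Prop :=
  ∀ u v X, #X ≤ 4 * k ^ 2 → (commonLinks H (W ∪ X) u v).Nonempty

/-- Outside `W`, exchanging a vertex `u` of an edge for another vertex `v` changes the weight `w` by
`φ v - φ u`. -/
def IsPotential {V G : Type*} [DecidableEq V] [AddCommGroup G] (H : Finset (Finset V))
    (W : Finset V) (w : Finset V → G) (φ : V → G) : Prop :=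
  ∀ u ∉ W, ∀ v ∉ W, ∀ T ∈ commonLinks H W u v, w (insert u T) - w (insert v T) = φ u - φ v

section CommonLinks

variable {V : Type*} [DecidableEq V] {k : ℕ} {H : Finset (Finset V)} {W X T : Finset V} {u v : V}

lemma mem_commonLinks : T ∈ commonLinks H X u v ↔
    u ∉ T ∧ v ∉ T ∧ insert u T ∈ H ∧ insert v T ∈ H ∧ Disjoint T X := by
  simp only [commonLinks, mem_inter, mem_linkAvoiding]
  tauto

lemma commonLinks_comm : commonLinks H X u v = commonLinks H X v u :=
  inter_comm _ _

lemma mem_commonLinks_union {Y : Finset V} :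
    T ∈ commonLinks H (X ∪ Y) u v ↔ T ∈ commonLinks H X u v ∧ Disjoint T Y := by
  simp only [mem_commonLinks, disjoint_union_right]
  tauto

lemma HyperUniform.card_of_mem_commonLinks (hH : HyperUniform k H)
    (hT : T ∈ commonLinks H X u v) : #T = k - 1 :=
  hH.card_of_mem_link (mem_filter.1 (mem_inter.1 hT).1).1

lemma HasCommonLinks.exists_pairwiseDisjoint (hL : HasCommonLinks k H W) (hH : HyperUniform k H)
    {ι : Type*} (s : Finset ι) (u v : ι → V) (X : Finset V) (hX : #X + #s * k ≤ 4 * k ^ 2) :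
    ∃ T : ι → Finset V, (∀ i ∈ s, T i ∈ commonLinks H (W ∪ X) (u i) (v i)) ∧
      (s : Set ι).PairwiseDisjoint T := by
  classical
  induction s using Finset.induction_on with
  | empty => exact ⟨fun _ => ∅, by simp⟩
  | insert a s ha ih =>
    rw [card_insert_of_notMem ha] at hX
    obtain ⟨T, hT, hd⟩ := ih (by linarith)
    have hcard : #(X ∪ s.biUnion T) ≤ 4 * k ^ 2 := calc
      #(X ∪ s.biUnion T) ≤ #X + #(s.biUnion T) := card_union_le _ _
      _ ≤ #X + #s * k := by
        gcongr
        exact card_biUnion_le_card_mul _ _ _ fun i hi =>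
          (hH.card_of_mem_commonLinks (hT i hi)).trans_le (k.sub_le 1)
      _ ≤ 4 * k ^ 2 := by linarith
    obtain ⟨S, hS⟩ := hL (u a) (v a) _ hcard
    rw [← union_assoc, mem_commonLinks_union, disjoint_biUnion_right] at hS
    have hcongr : ∀ i ∈ s, Function.update T a S i = T i := fun i hi =>
      Function.update_of_ne (ne_of_mem_of_not_mem hi ha) _ _
    refine ⟨Function.update T a S, forall_mem_insert _ _ _ |>.2 ⟨?_, fun i hi => ?_⟩, ?_⟩
    · simpa using hS.1
    · simpa only [hcongr i hi] using hT i hi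
    · rw [coe_insert, Set.pairwiseDisjoint_insert_of_notMem (mem_coe.not.2 ha)]
      refine ⟨fun i hi j hj hij => ?_, fun j hj => ?_⟩
      · simpa only [Function.onFun, hcongr i hi, hcongr j hj] using hd hi hj hij
      · simpa only [Function.update_self, hcongr j hj] using hS.2 j hj

lemma HasCommonLinks.exists_mem_disjoint (hL : HasCommonLinks k H W) (hH : HyperUniform k H)
    (hk : 2 ≤ k) [Nonempty V] (hX : #X ≤ 4 * k ^ 2) :
    ∃ e ∈ H, Disjoint e W ∧ Disjoint e X := by
  obtain ⟨x⟩ := ‹Nonempty V›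
  obtain ⟨T, hT⟩ := hL x x X hX
  obtain ⟨t, ht⟩ : T.Nonempty := by
    rw [← card_pos, hH.card_of_mem_commonLinks hT]
    omega
  obtain ⟨S, hS⟩ := hL t t X hX
  rw [mem_commonLinks] at hT hS
  refine ⟨_, hS.2.2.1, ?_⟩
  rw [← disjoint_union_right, disjoint_insert_left]
  exact ⟨disjoint_left.1 hT.2.2.2.2 ht, hS.2.2.2.2⟩

end CommonLinks

lemma HyperUniform.injective_of_pairwise_disjoint {V ι : Type*} {k : ℕ} {H : Finset (Finset V)}
    (hH : HyperUniform k H) (hk : 1 ≤ k) {E : ι → Finset V} (hE : ∀ i, E i ∈ H)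
    (hd : Pairwise (Function.onFun Disjoint E)) : Function.Injective E := by
  refine fun i j hij => by_contra fun hne => ?_
  have hempty : E j = ∅ := disjoint_self.1 (by simpa only [Function.onFun, hij] using hd hne)
  have := hH _ (hE j)
  rw [hempty, card_empty] at this
  omega

section OptionElim

variable {α V : Type*} [DecidableEq V] [Fintype α] {s : Finset V} {g : α → V}

lemma biUnion_option_elim (s : Finset V) (g : α → V) :
    (univ.biUnion fun i : Option α => i.elim s fun x => {g x}) = s ∪ univ.image g := by
  ext v
  simp [Option.exists, eq_comm]

lemma pairwise_disjoint_option_elim (hg : Function.Injective g) (hs : Disjoint s (univ.image g)) :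
    Pairwise (Function.onFun Disjoint fun i : Option α => i.elim s fun x => {g x}) := by
  have hs : ∀ x, g x ∉ s := fun x => disjoint_right.1 hs (mem_image_of_mem g (mem_univ x))
  rintro (_ | x) (_ | y) hxy
  · exact absurd rfl hxy
  · exact disjoint_singleton_right.2 (hs y)
  · exact disjoint_singleton_left.2 (hs x)
  · exact disjoint_singleton.2 fun h => hxy (congrArg some (hg h))

end OptionElim

section Potential

variable {V G ι : Type*} [DecidableEq V] [AddCommGroup G] [Fintype ι] {k : ℕ}
  {H : Finset (Finset V)} {W : Finset V} {w : Finset V → G}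

lemma IsSwitchInvariant.sum_eq_sum (hw : IsSwitchInvariant k H W w) (hH : HyperUniform k H)
    (hk : 1 ≤ k) (hι : Fintype.card ι ≤ k + 1) {E F : ι → Finset V} (hE : ∀ i, E i ∈ H)
    (hF : ∀ i, F i ∈ H) (hEd : Pairwise (Function.onFun Disjoint E))
    (hFd : Pairwise (Function.onFun Disjoint F)) (hEF : univ.biUnion E = univ.biUnion F)
    (hW : Disjoint (univ.biUnion E) W) : ∑ i, w (E i) = ∑ i, w (F i) := by
  have hmatching : ∀ {E : ι → Finset V}, (∀ i, E i ∈ H) → Pairwise (Function.onFun Disjoint E) →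
      IsMatching H (univ.image E) := fun {E} hE hEd =>
    ⟨image_subset_iff.2 fun i _ => hE i, by
      rw [coe_image, coe_univ, Set.image_univ]
      rintro _ ⟨i, rfl⟩ _ ⟨j, rfl⟩ hij
      exact hEd (ne_of_apply_ne E hij)⟩
  have hblocks : ∀ E : ι → Finset V, (univ.image E).biUnion id = univ.biUnion E :=
    fun E => image_biUnion ..
  have hcard : #(univ.biUnion E) ≤ k * (k + 1) := calc
    #(univ.biUnion E) ≤ #(univ : Finset ι) * k :=
      card_biUnion_le_card_mul _ _ _ fun i _ => (hH _ (hE i)).le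
    _ ≤ (k + 1) * k := by
      rw [card_univ]
      gcongr
    _ = k * (k + 1) := mul_comm _ _
  have hsum := hw _ _ (hmatching hE hEd) (hmatching hF hFd) (by rw [hblocks, hblocks, hEF])
    (by rwa [hblocks]) (by rwa [hblocks])
  rwa [sum_image (hH.injective_of_pairwise_disjoint hk hE hEd).injOn,
    sum_image (hH.injective_of_pairwise_disjoint hk hF hFd).injOn] at hsum

lemma IsSwitchInvariant.sum_union_eq_sum_union (hw : IsSwitchInvariant k H W w)
    (hH : HyperUniform k H) (hk : 1 ≤ k) (hι : Fintype.card ι ≤ k + 1) {P Q T : ι → Finset V}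
    (hP : ∀ i, P i ∪ T i ∈ H) (hQ : ∀ i, Q i ∪ T i ∈ H)
    (hPd : Pairwise (Function.onFun Disjoint P)) (hQd : Pairwise (Function.onFun Disjoint Q))
    (hTd : Pairwise (Function.onFun Disjoint T)) (hPQ : univ.biUnion P = univ.biUnion Q)
    (hTP : ∀ i, Disjoint (T i) (univ.biUnion P)) (hPW : Disjoint (univ.biUnion P) W)
    (hTW : ∀ i, Disjoint (T i) W) : ∑ i, w (P i ∪ T i) = ∑ i, w (Q i ∪ T i) := by
  have hunion : ∀ {P : ι → Finset V}, Pairwise (Function.onFun Disjoint P) →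
      (∀ i, Disjoint (T i) (univ.biUnion P)) →
      Pairwise (Function.onFun Disjoint fun i => P i ∪ T i) := by
    intro P hPd hTP i j hij
    simp only [disjoint_biUnion_right, mem_univ, true_imp_iff] at hTP
    simp only [Function.onFun, disjoint_union_left, disjoint_union_right]
    exact ⟨⟨hPd hij, hTP i j⟩, (hTP j i).symm, hTd hij⟩
  have hblocks : ∀ P : ι → Finset V,
      (univ.biUnion fun i => P i ∪ T i) = univ.biUnion P ∪ univ.biUnion T := fun P => by
    ext x
    simp only [mem_biUnion, mem_union, mem_univ, true_and, exists_or]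
  refine hw.sum_eq_sum hH hk hι hP hQ (hunion hPd hTP) (hunion hQd fun i => hPQ ▸ hTP i) ?_ ?_
  · rw [hblocks, hblocks, hPQ]
  · rw [hblocks, disjoint_union_left, disjoint_biUnion_left univ T]
    exact ⟨hPW, fun i _ => hTW i⟩

lemma IsSwitchInvariant.sum_insert_perm (hw : IsSwitchInvariant k H W w) (hH : HyperUniform k H)
    (hk : 1 ≤ k) (hι : Fintype.card ι ≤ k + 1) {x : ι → V} (hx : Function.Injective x)
    (σ : Equiv.Perm ι) {T : ι → Finset V} (hT : ∀ i, T i ∈ commonLinks H W (x i) (x (σ i)))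
    (hTd : Pairwise (Function.onFun Disjoint T)) (hTx : ∀ i j, x j ∉ T i) (hxW : ∀ i, x i ∉ W) :
    ∑ i, w (insert (x i) (T i)) = ∑ i, w (insert (x (σ i)) (T i)) := by
  simp only [mem_commonLinks] at hT
  have hblocks : ∀ σ : Equiv.Perm ι, (univ.biUnion fun i => {x (σ i)}) = univ.image x := fun σ => by
    ext y
    simp only [mem_biUnion, mem_image, mem_singleton, mem_univ, true_and]
    exact ⟨fun ⟨i, hi⟩ => ⟨σ i, hi.symm⟩,
      fun ⟨i, hi⟩ => ⟨σ.symm i, by rw [σ.apply_symm_apply, hi]⟩⟩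
  have hd : ∀ σ : Equiv.Perm ι, Pairwise (Function.onFun Disjoint fun i => {x (σ i)}) :=
    fun σ i j hij => disjoint_singleton.2 fun h => hij (σ.injective (hx h))
  simp only [insert_eq]
  refine hw.sum_union_eq_sum_union hH hk hι (P := fun i => {x i}) (Q := fun i => {x (σ i)})
    (fun i => (hT i).2.2.1) (fun i => (hT i).2.2.2.1) (hd 1) (hd σ) hTd
    ((hblocks 1).trans (hblocks σ).symm) (fun i => ?_) ?_ fun i => (hT i).2.2.2.2
  · rw [disjoint_biUnion_right]
    exact fun j _ => disjoint_singleton_right.2 (hTx i j)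
  · rw [disjoint_biUnion_left]
    exact fun i _ => disjoint_singleton_left.2 (hxW i)

lemma IsSwitchInvariant.sub_eq_sub (hw : IsSwitchInvariant k H W w)
    (hL : HasCommonLinks k H W) (hH : HyperUniform k H) (hk : 1 ≤ k) {u v : V} (hu : u ∉ W)
    (hv : v ∉ W) {S T : Finset V} (hS : S ∈ commonLinks H W u v) (hT : T ∈ commonLinks H W u v) :
    w (insert u S) - w (insert v S) = w (insert u T) - w (insert v T) := by
  obtain rfl | huv := eq_or_ne u v
  · simp only [sub_self]
  have key : ∀ {S R : Finset V}, S ∈ commonLinks H W u v → R ∈ commonLinks H W u v →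
      Disjoint S R → w (insert u S) - w (insert v S) = w (insert u R) - w (insert v R) := by
    intro S R hS hR hSR
    have hswap := hw.sum_insert_perm hH hk (ι := Bool) (by simpa) (x := fun b => cond b u v)
      (by simp [Function.Injective, huv, huv.symm]) Equiv.boolNot (T := fun b => cond b S R)
      (by simpa [commonLinks_comm (u := v)] using ⟨hR, hS⟩)
      (by simp [Pairwise, Function.onFun, hSR, hSR.symm])
      (by simpa using ⟨⟨(mem_commonLinks.1 hR).2.1, (mem_commonLinks.1 hR).1⟩,
        (mem_commonLinks.1 hS).2.1, (mem_commonLinks.1 hS).1⟩) (by simp [hu, hv])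
    simp only [Fintype.sum_bool, cond_true, cond_false, Equiv.boolNot_apply, Bool.not_true,
      Bool.not_false] at hswap
    rw [sub_eq_sub_iff_add_eq_add, hswap, add_comm]
  obtain ⟨R, hR⟩ := hL u v (S ∪ T) <| (card_union_le S T).trans <| by
    rw [hH.card_of_mem_commonLinks hS, hH.card_of_mem_commonLinks hT]
    have : k - 1 ≤ k := k.sub_le 1
    nlinarith
  rw [mem_commonLinks_union, disjoint_union_right] at hR
  rw [key hS hR.1 hR.2.1.symm, key hT hR.1 hR.2.2.symm]

lemma IsSwitchInvariant.sub_add_sub_add_sub (hw : IsSwitchInvariant k H W w)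
    (hL : HasCommonLinks k H W) (hH : HyperUniform k H) (hk : 2 ≤ k) {x : Fin 3 → V}
    (hx : Function.Injective x) (hxW : ∀ i, x i ∉ W) {S : Fin 3 → Finset V}
    (hS : ∀ i, S i ∈ commonLinks H W (x i) (x (i + 1))) :
    ∑ i, (w (insert (x i) (S i)) - w (insert (x (i + 1)) (S i))) = 0 := by
  obtain ⟨T, hT, hTd⟩ := hL.exists_pairwiseDisjoint hH univ x (fun i => x (i + 1)) (univ.image x)
    ((add_le_add_left card_image_le _).trans (by rw [card_univ, Fintype.card_fin]; nlinarith))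
  simp only [mem_commonLinks_union, mem_univ, true_imp_iff] at hT
  rw [coe_univ, Set.PairwiseDisjoint, Set.pairwise_univ] at hTd
  have hrot := hw.sum_insert_perm hH (by omega) (by simpa) hx (Equiv.addRight 1)
    (fun i => (hT i).1) hTd
    (fun i j => disjoint_right.1 (hT i).2 (mem_image_of_mem x (mem_univ j))) hxW
  rw [sum_congr rfl fun i _ => hw.sub_eq_sub hL hH (by omega) (hxW i) (hxW (i + 1)) (hS i)
    (hT i).1, sum_sub_distrib, sub_eq_zero]
  exact hrot

lemma IsSwitchInvariant.exists_isPotential (hw : IsSwitchInvariant k H W w)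
    (hL : HasCommonLinks k H W) (hH : HyperUniform k H) (hk : 2 ≤ k) :
    ∃ φ, IsPotential H W w φ := by
  by_cases hW : ∀ z, z ∈ W
  · exact ⟨0, fun u hu => absurd (hW u) hu⟩
  push Not at hW
  obtain ⟨z, hz⟩ := hW
  have hex : ∀ u v, (commonLinks H W u v).Nonempty := fun u v => by
    simpa only [union_empty] using hL u v ∅ (by simp)
  choose T hT using hex
  set d : V → V → G := fun u v => w (insert u (T u v)) - w (insert v (T u v))
  have hd_eq : ∀ u ∉ W, ∀ v ∉ W, ∀ S ∈ commonLinks H W u v,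
      w (insert u S) - w (insert v S) = d u v := fun u hu v hv S hS =>
    hw.sub_eq_sub hL hH (by omega) hu hv hS (hT u v)
  have hd_neg : ∀ u ∉ W, ∀ v ∉ W, d v u = -d u v := fun u hu v hv => by
    rw [← hd_eq v hv u hu _ (commonLinks_comm (u := u) ▸ hT u v), neg_sub]
  have hd_self : ∀ u, d u u = 0 := fun u => sub_self _
  refine ⟨fun u => d u z, fun u hu v hv S hS => ?_⟩
  rw [hd_eq u hu v hv S hS]
  change d u v = d u z - d v z
  obtain rfl | huv := eq_or_ne u v
  · rw [hd_self, sub_self]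
  obtain rfl | huz := eq_or_ne u z
  · rw [hd_self, zero_sub, hd_neg u hu v hv, neg_neg]
  obtain rfl | hvz := eq_or_ne v z
  · rw [hd_self, sub_zero]
  have hcycle := hw.sub_add_sub_add_sub hL hH hk (x := ![u, v, z])
    (S := ![T u v, T v z, T z u])
    (by simp [Function.Injective, Fin.forall_fin_succ, huv, huz, hvz, huv.symm, huz.symm, hvz.symm])
    (by simp [Fin.forall_fin_succ, hu, hv, hz])
    (by simp [Fin.forall_fin_succ, hT])
  have hcycle : d u v + d v z + d z u = 0 := by
    rw [Fin.sum_univ_three] at hcycle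
    exact hcycle
  rw [hd_neg u hu z hz] at hcycle
  rw [← sub_eq_zero, ← hcycle]
  abel

lemma IsSwitchInvariant.add_sum_insert_equiv (hw : IsSwitchInvariant k H W w)
    (hH : HyperUniform k H) (hk : 1 ≤ k) {e f : Finset V} (he : e ∈ H) (hf : f ∈ H)
    (heW : Disjoint e W) (hfW : Disjoint f W) (hef : Disjoint e f) (σ : e ≃ f) {T : e → Finset V}
    (hT : ∀ x, T x ∈ commonLinks H (W ∪ (e ∪ f)) (σ x) x)
    (hTd : Pairwise (Function.onFun Disjoint T)) :
    w e + ∑ x, w (insert (σ x : V) (T x)) = w f + ∑ x : e, w (insert (x : V) (T x)) := by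
  have hTef := fun x => (mem_commonLinks_union.1 (hT x)).2
  have hTH := fun x => mem_commonLinks.1 (mem_commonLinks_union.1 (hT x)).1
  have hσ : univ.image (fun x => (σ x : V)) = f := by
    ext v
    simp only [mem_image, mem_univ, true_and]
    exact ⟨fun ⟨x, hx⟩ => hx ▸ (σ x).2, fun hv => ⟨σ.symm ⟨v, hv⟩, by simp⟩⟩
  have hid : univ.image (fun x : e => (x : V)) = e := by
    simp only [univ_eq_attach, attach_image_val]
  have hP : (univ.biUnion fun i : Option e => i.elim e fun x => {(σ x : V)}) = e ∪ f := by
    rw [biUnion_option_elim, hσ]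
  have hQ : (univ.biUnion fun i : Option e => i.elim f fun x => {(x : V)}) = e ∪ f := by
    rw [biUnion_option_elim, hid, union_comm]
  have hsum := hw.sum_union_eq_sum_union hH hk (ι := Option e) (by simp [hH e he])
    (P := fun i => i.elim e fun x => {(σ x : V)}) (Q := fun i => i.elim f fun x => {(x : V)})
    (T := fun i => i.elim ∅ T)
    (by simpa [Option.forall, ← insert_eq] using ⟨he, fun x hx => (hTH ⟨x, hx⟩).2.2.1⟩)
    (by simpa [Option.forall, ← insert_eq] using ⟨hf, fun x hx => (hTH ⟨x, hx⟩).2.2.2.1⟩)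
    (pairwise_disjoint_option_elim (Subtype.val_injective.comp σ.injective) (hσ.symm ▸ hef))
    (pairwise_disjoint_option_elim Subtype.val_injective (hid.symm ▸ hef.symm))
    (by
      rintro (_ | x) (_ | y) hxy
      exacts [absurd rfl hxy, disjoint_empty_left _, disjoint_empty_right _,
        hTd fun h => hxy (congrArg some h)])
    (hP.trans hQ.symm)
    (by simpa [Option.forall, hP] using fun x hx => hTef ⟨x, hx⟩)
    (by simp [hP, heW, hfW])
    (by simpa [Option.forall] using fun x hx => (hTH ⟨x, hx⟩).2.2.2.2)
  simpa only [Fintype.sum_option, Option.elim, union_empty, ← insert_eq] using hsum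

lemma IsPotential.sub_sum_eq_of_disjoint {φ : V → G} (hφ : IsPotential H W w φ)
    (hw : IsSwitchInvariant k H W w) (hL : HasCommonLinks k H W) (hH : HyperUniform k H)
    (hk : 1 ≤ k) {e f : Finset V} (he : e ∈ H) (hf : f ∈ H) (heW : Disjoint e W)
    (hfW : Disjoint f W) (hef : Disjoint e f) : w e - ∑ v ∈ e, φ v = w f - ∑ v ∈ f, φ v := by
  obtain ⟨σ⟩ : Nonempty (e ≃ f) := ⟨equivOfCardEq (by rw [hH e he, hH f hf])⟩
  obtain ⟨T, hT, hTd⟩ := hL.exists_pairwiseDisjoint hH univ (fun x : e => (σ x : V))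
    (fun x => (x : V)) (e ∪ f) (by
      have := card_union_le e f
      rw [hH e he, hH f hf] at this
      rw [card_univ, Fintype.card_coe, hH e he]
      nlinarith)
  simp only [mem_univ, true_imp_iff] at hT
  rw [coe_univ, Set.PairwiseDisjoint, Set.pairwise_univ] at hTd
  have hsum := hw.add_sum_insert_equiv hH hk he hf heW hfW hef σ hT hTd
  have hexchange : ∑ x : e, (w (insert (σ x : V) (T x)) - w (insert (x : V) (T x))) =
      ∑ x : e, (φ (σ x) - φ x) := sum_congr rfl fun x _ =>
    hφ _ (disjoint_left.1 hfW (σ x).2) _ (disjoint_left.1 heW x.2) _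
      (mem_commonLinks_union.1 (hT x)).1
  rw [sum_sub_distrib, sum_sub_distrib, σ.sum_comp fun y : f => φ y, sum_coe_sort, sum_coe_sort]
    at hexchange
  grind

lemma IsPotential.sub_sum_eq {φ : V → G} (hφ : IsPotential H W w φ)
    (hw : IsSwitchInvariant k H W w) (hL : HasCommonLinks k H W) (hH : HyperUniform k H)
    (hk : 2 ≤ k) {e f : Finset V} (he : e ∈ H) (hf : f ∈ H) (heW : Disjoint e W)
    (hfW : Disjoint f W) : w e - ∑ v ∈ e, φ v = w f - ∑ v ∈ f, φ v := by
  obtain ⟨x, -⟩ : e.Nonempty := card_pos.1 (by rw [hH e he]; omega)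
  have : Nonempty V := ⟨x⟩
  obtain ⟨g, hg, hgW, hgX⟩ := hL.exists_mem_disjoint hH hk (X := e ∪ f) <|
    (card_union_le e f).trans (by rw [hH e he, hH f hf]; nlinarith)
  rw [disjoint_union_right] at hgX
  rw [hφ.sub_sum_eq_of_disjoint hw hL hH (by omega) he hg heW hgW hgX.1.symm,
    hφ.sub_sum_eq_of_disjoint hw hL hH (by omega) hf hg hfW hgW hgX.2.symm]

end Potential

section Classification

variable {V ι : Type*} [DecidableEq ι]

lemma eq_or_eq_of_single_sub_single {a b i j p q : ι}
    (h : (Pi.single a 1 - Pi.single b 1 : ι → ℤ) - (Pi.single i 1 - Pi.single j 1) =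
      Pi.single p 1 - Pi.single q 1) : a = b ∨ i = j ∨ a = i ∨ b = j := by
  by_contra! hne
  have ha := congrFun h a
  have hb := congrFun h b
  have hi := congrFun h i
  have hj := congrFun h j
  simp only [Pi.sub_apply, Pi.single_apply] at ha hb hi hj
  grind

-- The differences `φ u - φ z` are roots of type `A`. Two of them whose difference is again a root
-- share their head or their tail.
lemma forall_common_tail_or_forall_common_head {φ : V → ι → ℤ} {U : Set V} {z u : V} {i j : ι}
    (hφ : ∀ u ∈ U, ∀ v ∈ U, ∃ i j, φ u - φ v = Pi.single i 1 - Pi.single j 1)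
    (hz : z ∈ U) (hu : u ∈ U) (hij : φ u - φ z = Pi.single i 1 - Pi.single j 1) (hne : i ≠ j) :
    (∀ w ∈ U, ∃ l, φ w - φ z = Pi.single l 1 - Pi.single j 1) ∨
      ∀ w ∈ U, ∃ l, φ w - φ z = Pi.single i 1 - Pi.single l 1 := by
  have hroot : ∀ v ∈ U, ∀ w ∈ U, ∀ {a b c d}, φ v - φ z = Pi.single a 1 - Pi.single b 1 →
      φ w - φ z = Pi.single c 1 - Pi.single d 1 → a = b ∨ c = d ∨ a = c ∨ b = d := by
    intro v hv w hw a b c d hv' hw'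
    obtain ⟨p, q, hpq⟩ := hφ v hv w hw
    exact eq_or_eq_of_single_sub_single (by rw [← hpq, ← hv', ← hw', sub_sub_sub_cancel_right])
  by_contra! hcon
  obtain ⟨⟨x, hx, hx_tail⟩, y, hy, hy_head⟩ := hcon
  obtain ⟨a, b, hab⟩ := hφ x hx z hz
  obtain ⟨c, d, hcd⟩ := hφ y hy z hz
  have hab_ne : a ≠ b := by
    rintro rfl
    exact hx_tail j (by rw [hab, sub_self, sub_self])
  have hcd_ne : c ≠ d := by
    rintro rfl
    exact hy_head i (by rw [hcd, sub_self, sub_self])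
  have hbj : b ≠ j := fun h => hx_tail a (h ▸ hab)
  have hci : c ≠ i := fun h => hy_head d (h ▸ hcd)
  have hai : a = i := by simpa [hab_ne, hne, hbj] using hroot x hx u hu hab hij
  have hdj : d = j := by simpa [hcd_ne, hne, hci] using hroot y hy u hu hcd hij
  obtain h | h | h | h := hroot x hx y hy hab hcd
  exacts [hab_ne h, hcd_ne h, hci (h.symm.trans hai), hbj (h.trans hdj)]

lemma exists_eq_add_smul_single {φ : V → ι → ℤ} {U : Set V}
    (hφ : ∀ u ∈ U, ∀ v ∈ U, ∃ i j, φ u - φ v = Pi.single i 1 - Pi.single j 1) :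
    ∃ (κ : ι → ℤ) (ε : ℤˣ), ∀ u ∈ U, ∃ i, φ u = κ + (ε : ℤ) • Pi.single i 1 := by
  obtain rfl | ⟨z, hz⟩ := U.eq_empty_or_nonempty
  · exact ⟨0, 1, by simp⟩
  by_cases hall : ∀ u ∈ U, φ u = φ z
  · obtain ⟨i, -⟩ := hφ z hz z hz
    exact ⟨φ z - Pi.single i 1, 1, fun u hu => ⟨i, by simp [hall u hu]⟩⟩
  push Not at hall
  obtain ⟨u, hu, hne⟩ := hall
  obtain ⟨i, j, hij⟩ := hφ u hu z hz
  have hij_ne : i ≠ j := by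
    rintro rfl
    exact hne (sub_eq_zero.1 (hij.trans (sub_self _)))
  obtain htail | hhead := forall_common_tail_or_forall_common_head hφ hz hu hij hij_ne
  · refine ⟨φ z - Pi.single j 1, 1, fun w hw => (htail w hw).imp fun l hl => ?_⟩
    rw [Units.val_one, one_smul, eq_add_of_sub_eq hl]
    abel
  · refine ⟨φ z + Pi.single i 1, -1, fun w hw => (hhead w hw).imp fun l hl => ?_⟩
    rw [Units.val_neg, Units.val_one, neg_smul, one_smul, eq_add_of_sub_eq hl]
    abel

lemma sum_single_apply {α : Type*} (f : α → ι) (s : Finset α) (j : ι) :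
    (∑ x ∈ s, (Pi.single (f x) 1 : ι → ℤ)) j = profile f s j := by
  simp only [Finset.sum_apply, Pi.single_apply, eq_comm (a := j), sum_boole, profile]

variable [DecidableEq V] {k : ℕ} {H : Finset (Finset V)} {W : Finset V} {c : Finset V → ι}

lemma exists_profile_eq_add_smul_single [Nonempty ι] (hH : HyperUniform k H) (hk : 2 ≤ k)
    (hL : HasCommonLinks k H W)
    (hc : IsSwitchInvariant k H W fun e => (Pi.single (c e) 1 : ι → ℤ)) :
    ∃ (cl : V → ι) (a : ι → ℤ) (ε : ℤˣ), ∀ e ∈ H, Disjoint e W → ∀ j,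
      (profile cl e j : ℤ) = a j + ε * if c e = j then 1 else 0 := by
  obtain ⟨φ, hφ⟩ := hc.exists_isPotential hL hH hk
  have hroot : ∀ u ∈ {v | v ∉ W}, ∀ v ∈ {v | v ∉ W}, ∃ i j, φ u - φ v =
      Pi.single i 1 - Pi.single j 1 := fun u hu v hv => by
    obtain ⟨T, hT⟩ := hL u v ∅ (by simp)
    exact ⟨_, _, (hφ u hu v hv T (by rwa [union_empty] at hT)).symm⟩
  obtain ⟨κ, ε, hκ⟩ := exists_eq_add_smul_single hroot
  choose! cl hcl using hκ
  by_cases hE : ∃ f ∈ H, Disjoint f W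
  swap
  · push Not at hE
    exact ⟨cl, 0, 1, fun e he hd => absurd hd (hE e he)⟩
  obtain ⟨f, hf, hfW⟩ := hE
  have hsum : ∀ e ∈ H, Disjoint e W → ∀ j,
      (∑ v ∈ e, φ v) j = k * κ j + ε * profile cl e j := fun e he hd j => by
    rw [sum_congr rfl fun v hv => hcl v (disjoint_left.1 hd hv), sum_add_distrib, sum_const,
      ← smul_sum, Pi.add_apply, Pi.smul_apply, Pi.smul_apply, sum_single_apply, hH e he,
      nsmul_eq_mul, smul_eq_mul]
  refine ⟨cl, fun j => profile cl f j - ε * if c f = j then 1 else 0, ε, fun e he hd j => ?_⟩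
  have hedge := congrFun (hφ.sub_sum_eq hc hL hH hk he hf hd hfW) j
  rw [Pi.sub_apply, Pi.sub_apply, hsum e he hd, hsum f hf hfW, Pi.single_apply, Pi.single_apply]
    at hedge
  have hε : (ε : ℤ) * ε = 1 := by
    rw [← Units.val_mul, Int.units_mul_self, Units.val_one]
  simp only [eq_comm (a := j)] at hedge
  linear_combination (-(ε : ℤ)) * hedge + (profile cl f j - profile cl e j) * hε

end Classification

section DividedMonomial

variable {V ι : Type*} [Fintype ι]

/-- The divided monomial `∏ j, y j ^ b j / (b j)!`. It bounds the number of vertex sets with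
`b j` elements in the `j`-th class when the classes have sizes `y j`. -/
noncomputable def dividedMonomial (y : ι → ℝ) (b : ι → ℕ) : ℝ :=
  ∏ j, y j ^ b j / (b j).factorial

lemma dividedMonomial_nonneg {y : ι → ℝ} (hy : ∀ j, 0 ≤ y j) (b : ι → ℕ) :
    0 ≤ dividedMonomial y b :=
  prod_nonneg fun j _ => div_nonneg (pow_nonneg (hy j) _) (by positivity)

lemma dividedMonomial_le_dividedMonomial {x y : ι → ℝ} (hx : ∀ j, 0 ≤ x j)
    (hxy : ∀ j, x j ≤ y j) (b : ι → ℕ) : dividedMonomial x b ≤ dividedMonomial y b := by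
  refine prod_le_prod (fun j _ => div_nonneg (pow_nonneg (hx j) _) (by positivity)) fun j _ => ?_
  have := pow_le_pow_left₀ (hx j) (hxy j) (b j)
  gcongr

lemma dividedMonomial_const_mul (s : ℝ) (y : ι → ℝ) (b : ι → ℕ) :
    dividedMonomial (fun j => s * y j) b = s ^ (∑ j, b j) * dividedMonomial y b := by
  simp only [dividedMonomial, ← prod_pow_eq_pow_sum, ← prod_mul_distrib, mul_pow, mul_div_assoc]

lemma dividedMonomial_add_single [DecidableEq ι] (y : ι → ℝ) (b : ι → ℕ) (i : ι) :
    dividedMonomial y (b + Pi.single i 1) * (b i + 1) = dividedMonomial y b * y i := by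
  have hrest : ∏ j ∈ univ.erase i, y j ^ (b + Pi.single i 1 : ι → ℕ) j /
      (((b + Pi.single i 1 : ι → ℕ) j).factorial : ℝ) =
      ∏ j ∈ univ.erase i, y j ^ b j / ((b j).factorial : ℝ) :=
    prod_congr rfl fun j hj => by simp [ne_of_mem_erase hj]
  have hfac : ((b i).factorial : ℝ) ≠ 0 := by positivity
  rw [dividedMonomial, dividedMonomial, ← mul_prod_erase _ _ (mem_univ i),
    ← mul_prod_erase _ (fun j => y j ^ b j / ((b j).factorial : ℝ)) (mem_univ i), hrest]
  simp only [Pi.add_apply, Pi.single_eq_same, Nat.factorial_succ, Nat.cast_mul, Nat.cast_succ]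
  field_simp
  ring

omit [Fintype ι] in
lemma sub_single_add_single [DecidableEq ι] {b : ι → ℕ} {i : ι} (hi : b i ≠ 0) :
    b - Pi.single i 1 + Pi.single i 1 = b := by
  ext j
  obtain rfl | hj := eq_or_ne j i
  · simpa using Nat.sub_add_cancel (Nat.one_le_iff_ne_zero.2 hi)
  · simp [hj]

lemma dividedMonomial_sub_single [DecidableEq ι] (y : ι → ℝ) {b : ι → ℕ} {i : ι} (hi : b i ≠ 0) :
    dividedMonomial y (b - Pi.single i 1) * y i = dividedMonomial y b * b i := by
  have h := dividedMonomial_add_single y (b - Pi.single i 1) i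
  rw [sub_single_add_single hi] at h
  rw [← h, Pi.sub_apply, Pi.single_eq_same, Nat.cast_sub (Nat.one_le_iff_ne_zero.2 hi)]
  ring

lemma factorial_mul_dividedMonomial (y : ι → ℝ) (b : ι → ℕ) :
    ((∑ j, b j).factorial : ℝ) * dividedMonomial y b
      = Nat.multinomial univ b * ∏ j, y j ^ b j := by
  have hprod : (∏ j, ((b j).factorial : ℝ)) ≠ 0 := prod_ne_zero_iff.2 fun j _ => by positivity
  rw [← Nat.multinomial_spec, dividedMonomial, prod_div_distrib, Nat.cast_mul, Nat.cast_prod]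
  field_simp

lemma sum_dividedMonomial_le {y : ι → ℝ} (hy : ∀ j, 0 ≤ y j) {m : ℕ} {B : Finset (ι → ℕ)}
    (hB : ∀ b ∈ B, ∑ j, b j = m) :
    ∑ b ∈ B, dividedMonomial y b ≤ (∑ j, y j) ^ m / (m.factorial : ℝ) := by
  classical
  rw [le_div_iff₀ (by positivity), sum_pow_eq_sum_piAntidiag, sum_mul]
  calc ∑ b ∈ B, dividedMonomial y b * m.factorial
      = ∑ b ∈ B, (Nat.multinomial univ b : ℝ) * ∏ j, y j ^ b j :=
        sum_congr rfl fun b hb => by rw [← factorial_mul_dividedMonomial, hB b hb, mul_comm]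
    _ ≤ ∑ b ∈ piAntidiag univ m, (Nat.multinomial univ b : ℝ) * ∏ j, y j ^ b j := by
        refine sum_le_sum_of_subset_of_nonneg (fun b hb => by simp [hB b hb]) fun b _ _ => ?_
        exact mul_nonneg (by positivity) (prod_nonneg fun j _ => pow_nonneg (hy j) _)

variable [Fintype V] [DecidableEq ι]

lemma card_le_dividedMonomial {cl : V → ι} {b : ι → ℕ} {Q : Finset (Finset V)}
    (hQ : ∀ T ∈ Q, profile cl T = b) :
    (#Q : ℝ) ≤ dividedMonomial (fun j => (profile cl univ j : ℝ)) b := by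
  have hcard : #Q ≤ #(Fintype.piFinset fun j => powersetCard (b j) {v | cl v = j}) := by
    refine card_le_card_of_injOn (fun T j => {v ∈ T | cl v = j}) (fun T hT => ?_)
      fun T _ T' _ h => ?_
    · simp only [mem_coe, Fintype.mem_piFinset, mem_powersetCard]
      exact fun j => ⟨filter_subset_filter _ (subset_univ T), congrFun (hQ T hT) j⟩
    · ext v
      simpa using Finset.ext_iff.1 (congrFun h (cl v)) v
  calc (#Q : ℝ) ≤ ∏ j, ((profile cl univ j).choose (b j) : ℝ) := by
        rw [Fintype.card_piFinset] at hcard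
        simp only [card_powersetCard] at hcard
        exact_mod_cast hcard
    _ ≤ _ := prod_le_prod (fun j _ => by positivity) fun j _ => Nat.choose_le_pow_div _ _

lemma card_le_sum_dividedMonomial {cl : V → ι} {B : Finset (ι → ℕ)} {Q : Finset (Finset V)}
    (hQ : ∀ T ∈ Q, profile cl T ∈ B) :
    (#Q : ℝ) ≤ ∑ b ∈ B, dividedMonomial (fun j => (profile cl univ j : ℝ)) b := by
  classical
  rw [card_eq_sum_card_fiberwise hQ, Nat.cast_sum]
  exact sum_le_sum fun b _ => card_le_dividedMonomial fun T hT => (mem_filter.1 hT).2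

end DividedMonomial

lemma gfun_congr {k r : ℕ} (hr : 1 ≤ r) {a b : ℕ → ℕ} (hab : ∀ i < r, a i = b i) :
    gfun k r a = gfun k r b := by
  have hrange (f : ℕ → ℝ) : ∀ i ∈ range r, f (a i) = f (b i) := fun i hi => by
    rw [hab i (mem_range.1 hi)]
  have hIco (f : ℕ → ℝ) : ∀ i ∈ Ico 1 r, f (a i) = f (b i) := fun i hi => by
    rw [hab i (mem_Ico.1 hi).2]
  unfold gfun
  rw [hab 0 hr, prod_congr rfl (hrange fun x => x.factorial),
    prod_congr rfl (hrange fun x => (((r * x + 1 : ℕ) : ℝ) / (r * k : ℕ)) ^ x),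
    sum_congr rfl (hIco fun x => ((r * x + 1 : ℕ) : ℝ) / (x + 1 : ℕ))]

lemma gfun_le_gThr {k r : ℕ} (hk : 1 ≤ k) (hr : 1 ≤ r) {a : ℕ → ℕ} (ha : IsVec k r a) :
    gfun k r a ≤ gThr k r := by
  refine le_csSup (Set.Finite.bddAbove (Set.Finite.subset (Set.finite_range
    fun b : Fin r → Fin k => gfun k r fun i => if h : i < r then b ⟨i, h⟩ else 0) ?_)) ⟨a, ha, rfl⟩
  rintro _ ⟨b, hb, rfl⟩
  have hbk (i : Fin r) : b i < k := by
    have := single_le_sum (f := b) (fun _ _ => Nat.zero_le _) (mem_range.2 i.isLt)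
    have := hb.2
    omega
  exact ⟨fun i => ⟨b i, hbk i⟩, gfun_congr hr fun i hi => dif_pos hi⟩

/-- The relative sizes of the vertex classes when the `r` colours appear equally often in a perfect
matching each of whose edges has type `a` plus its own colour. -/
noncomputable def balancedDensity (k r : ℕ) (a : Fin r → ℕ) (j : Fin r) : ℝ :=
  ((r * a j + 1 : ℕ) : ℝ) / ((r * k : ℕ) : ℝ)

lemma balancedDensity_pos {k r : ℕ} (hk : 1 ≤ k) (hr : 1 ≤ r) (a : Fin r → ℕ) (j : Fin r) :
    0 < balancedDensity k r a j := by
  unfold balancedDensity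
  positivity

lemma gfun_eq_dividedMonomial {k r : ℕ} [NeZero r] {a' : ℕ → ℕ} {a : Fin r → ℕ}
    {σ : Equiv.Perm (Fin r)} (haσ : ∀ i : Fin r, a' i = a (σ i)) :
    gfun k r a' = (k - 1).factorial * (dividedMonomial (balancedDensity k r a) a *
      (1 + a (σ 0) / (r * a (σ 0) + 1 : ℕ) *
        ∑ i ∈ univ.erase (σ 0), ((r * a i + 1 : ℕ) : ℝ) / (a i + 1 : ℕ))) := by
  have hzero : a' 0 = a (σ 0) := haσ 0
  have hsum : ∑ i ∈ Ico 1 r, ((r * a' i + 1 : ℕ) : ℝ) / (a' i + 1 : ℕ) =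
      ∑ i ∈ univ.erase (σ 0), ((r * a i + 1 : ℕ) : ℝ) / (a i + 1 : ℕ) := by
    have hIco := sum_eq_sum_Ico_succ_bot (NeZero.pos r)
      fun i => ((r * a' i + 1 : ℕ) : ℝ) / (a' i + 1 : ℕ)
    rw [← range_eq_Ico, sum_range] at hIco
    simp only [haσ, hzero] at hIco
    rw [Equiv.sum_comp σ fun i => ((r * a i + 1 : ℕ) : ℝ) / (a i + 1 : ℕ),
      ← add_sum_erase univ _ (mem_univ (σ 0))] at hIco
    exact (add_left_cancel hIco).symm
  rw [gfun, hsum, hzero, prod_range, prod_range]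
  simp only [haσ]
  rw [Equiv.prod_comp σ fun i => ((a i).factorial : ℝ),
    Equiv.prod_comp σ fun i => (((r * a i + 1 : ℕ) : ℝ) / ((r * k : ℕ) : ℝ)) ^ a i,
    dividedMonomial, prod_div_distrib]
  simp only [balancedDensity]
  ring

lemma exists_dividedMonomial_mul_le_gThr {k r : ℕ} (hk : 1 ≤ k) (hr : 1 ≤ r) {a : Fin r → ℕ}
    (ha : ∑ j, a j = k - 1) :
    ∃ i₀ : Fin r, (k - 1).factorial * (dividedMonomial (balancedDensity k r a) a *
      (1 + a i₀ / (r * a i₀ + 1 : ℕ) *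
        ∑ i ∈ univ.erase i₀, ((r * a i + 1 : ℕ) : ℝ) / (a i + 1 : ℕ))) ≤ gThr k r := by
  have : NeZero r := ⟨by omega⟩
  set σ := Tuple.sort a
  set a' : ℕ → ℕ := fun i => if h : i < r then a (σ ⟨i, h⟩) else 0 with ha'
  have haσ (i : Fin r) : a' i = a (σ i) := dif_pos i.isLt
  have hvec : IsVec k r a' := by
    refine ⟨fun i j hij hj => ?_, ?_⟩
    · simp only [ha', hij.trans_lt hj, hj, dif_pos]
      exact Tuple.monotone_sort a (Fin.mk_le_mk.2 hij)
    · rw [sum_range]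
      simp only [haσ]
      rw [Equiv.sum_comp σ a, ha]
  exact ⟨σ 0, (gfun_eq_dividedMonomial haσ).symm.trans_le (gfun_le_gThr hk hr hvec)⟩

lemma balancedDensity_single_pow_le_gThr {k r : ℕ} (hk : 1 ≤ k) (j : Fin r) :
    balancedDensity k r (Pi.single j (k - 1)) j ^ (k - 1) ≤ gThr k r := by
  have hr : 1 ≤ r := j.pos
  set a : Fin r → ℕ := Pi.single j (k - 1) with ha
  obtain ⟨i₀, hi₀⟩ := exists_dividedMonomial_mul_le_gThr hk hr (a := a) (by simp [ha])
  refine le_trans ?_ hi₀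
  have hmono : (k - 1).factorial * dividedMonomial (balancedDensity k r a) a =
      balancedDensity k r a j ^ (k - 1) := by
    rw [dividedMonomial, Fintype.prod_eq_single j fun i hi => by simp [ha, hi]]
    simp only [ha, Pi.single_eq_same]
    field_simp
  rw [← hmono, ← mul_assoc]
  exact le_mul_of_one_le_right
    (mul_nonneg (by positivity) (dividedMonomial_nonneg (fun i =>
      (balancedDensity_pos hk hr a i).le) a)) (le_add_of_nonneg_right (by positivity))

section PlusType

variable {V ι : Type*} [Fintype ι] [DecidableEq ι]

/-- Off `W`, every edge has `a j` vertices in class `j`, and one more if its colour is `j`. -/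
def IsPlusType {V : Type*} (H : Finset (Finset V)) (W : Finset V) (c : Finset V → ι) (cl : V → ι)
    (a : ι → ℕ) : Prop :=
  ∀ e ∈ H, Disjoint e W → profile cl e = a + Pi.single (c e) 1

/-- The possible types of the link sets of a vertex in class `i₀` when every edge has type `a` plus
its own colour. -/
def linkTypes (a : ι → ℕ) (i₀ : ι) : Finset (ι → ℕ) :=
  {b ∈ piAntidiag univ (∑ j, a j) | ∃ i, b + Pi.single i₀ 1 = a + Pi.single i 1}

lemma mem_linkTypes {a b : ι → ℕ} {i₀ : ι} :
    b ∈ linkTypes a i₀ ↔ ∃ i, b + Pi.single i₀ 1 = a + Pi.single i 1 := by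
  refine ⟨fun h => (mem_filter.1 h).2, fun ⟨i, hi⟩ => mem_filter.2 ⟨?_, i, hi⟩⟩
  have hsum := congrArg (fun x : ι → ℕ => ∑ j, x j) hi
  simp only [Pi.add_apply, sum_add_distrib, sum_pi_single', mem_univ, if_true] at hsum
  simpa using hsum

lemma sum_eq_of_mem_linkTypes {a b : ι → ℕ} {i₀ : ι} (hb : b ∈ linkTypes a i₀) :
    ∑ j, b j = ∑ j, a j :=
  (mem_piAntidiag.1 (mem_filter.1 hb).1).1

lemma linkTypes_eq_singleton {a : ι → ℕ} {i₀ : ι} (ha : a i₀ = 0) : linkTypes a i₀ = {a} := by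
  ext b
  rw [mem_linkTypes, mem_singleton]
  refine ⟨fun ⟨i, hi⟩ => ?_, fun h => ⟨i₀, by rw [h]⟩⟩
  obtain rfl : i = i₀ := by
    by_contra hne
    simpa [ha, Ne.symm hne] using congrFun hi i₀
  exact add_right_cancel hi

lemma linkTypes_add_single (a : ι → ℕ) (i₀ : ι) :
    linkTypes (a + Pi.single i₀ 1) i₀ = univ.image fun i => a + Pi.single i 1 := by
  ext b
  simp only [mem_linkTypes, mem_image, mem_univ, true_and, add_right_comm a (Pi.single i₀ 1),
    add_left_inj, eq_comm]

lemma sum_dividedMonomial_linkTypes {y : ι → ℝ} (hy : ∀ j, 0 < y j) (a : ι → ℕ) (i₀ : ι) :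
    ∑ b ∈ linkTypes a i₀, dividedMonomial y b =
      dividedMonomial y a * (1 + a i₀ / y i₀ * ∑ i ∈ univ.erase i₀, y i / (a i + 1)) := by
  by_cases ha : a i₀ = 0
  · simp [linkTypes_eq_singleton ha, ha]
  obtain ⟨a, rfl⟩ : ∃ a' : ι → ℕ, (a' + Pi.single i₀ 1 : ι → ℕ) = a :=
    ⟨_, sub_single_add_single ha⟩
  have hinj : Function.Injective fun i : ι => a + Pi.single i 1 := fun i j hij => by
    by_contra hne
    simpa [hne] using congrFun (add_left_cancel hij) i
  rw [linkTypes_add_single, sum_image hinj.injOn, ← add_sum_erase _ _ (mem_univ i₀), mul_add,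
    mul_one, mul_sum, mul_sum]
  refine congrArg _ (sum_congr rfl fun i hi => ?_)
  have hi₀ := dividedMonomial_add_single y a i₀
  have hi' := dividedMonomial_add_single y a i
  have hyi₀ := (hy i₀).ne'
  simp only [Pi.add_apply, Pi.single_eq_same, Pi.single_eq_of_ne (ne_of_mem_erase hi), add_zero]
  push_cast
  field_simp
  linear_combination y i₀ * hi' - y i * hi₀

variable [DecidableEq V] {k r : ℕ} {H : Finset (Finset V)} {W : Finset V}

lemma IsPlusType.profile_mem_linkTypes {c : Finset V → ι} {cl : V → ι} {a : ι → ℕ}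
    (htype : IsPlusType H W c cl a) {v : V} (hv : v ∉ W)
    {T : Finset V} (hT : T ∈ linkAvoiding H W v) : profile cl T ∈ linkTypes a (cl v) := by
  obtain ⟨hvT, hTH, hTW⟩ := mem_linkAvoiding.1 hT
  refine mem_linkTypes.2 ⟨c (insert v T), ?_⟩
  rw [← htype _ hTH (disjoint_insert_left.2 ⟨hv, hTW⟩)]
  ext j
  simp [profile_insert cl hvT, Pi.single_apply, eq_comm]

variable [Fintype V]

lemma IsPlusType.exists_forall_card_linkAvoiding_le {c : Finset V → Fin r} {cl : V → Fin r}
    {a : Fin r → ℕ} (htype : IsPlusType H W c cl a) (hk : 1 ≤ k) (hr : 1 ≤ r)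
    (ha : ∑ j, a j = k - 1) {s : ℝ} (hs : 0 ≤ s)
    (hclass : ∀ j, (profile cl univ j : ℝ) ≤ s * balancedDensity k r a j) :
    ∃ i₀ : Fin r, ∀ v ∉ W, cl v = i₀ →
      (#(linkAvoiding H W v) : ℝ) ≤ s ^ (k - 1) / (k - 1).factorial * gThr k r := by
  obtain ⟨i₀, hi₀⟩ := exists_dividedMonomial_mul_le_gThr hk hr ha
  have hpos := balancedDensity_pos hk hr a
  have hterm (i : Fin r) : balancedDensity k r a i / (a i + 1) =
      1 / (r * k) * (((r * a i + 1 : ℕ) : ℝ) / (a i + 1 : ℕ)) := by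
    unfold balancedDensity
    push_cast
    field_simp
  have hcoef : a i₀ / balancedDensity k r a i₀ *
      ∑ i ∈ univ.erase i₀, balancedDensity k r a i / (a i + 1) = a i₀ / (r * a i₀ + 1 : ℕ) *
        ∑ i ∈ univ.erase i₀, ((r * a i + 1 : ℕ) : ℝ) / (a i + 1 : ℕ) := by
    simp only [hterm, ← mul_sum]
    unfold balancedDensity
    push_cast
    field_simp
  refine ⟨i₀, fun v hv hcl => ?_⟩
  calc (#(linkAvoiding H W v) : ℝ)
      ≤ ∑ b ∈ linkTypes a i₀, dividedMonomial (fun j => (profile cl univ j : ℝ)) b :=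
        card_le_sum_dividedMonomial fun T hT => hcl ▸ htype.profile_mem_linkTypes hv hT
    _ ≤ ∑ b ∈ linkTypes a i₀, dividedMonomial (fun j => s * balancedDensity k r a j) b :=
        sum_le_sum fun b _ => dividedMonomial_le_dividedMonomial (fun j => by positivity) hclass b
    _ = s ^ (k - 1) * ∑ b ∈ linkTypes a i₀, dividedMonomial (balancedDensity k r a) b := by
        rw [mul_sum]
        refine sum_congr rfl fun b hb => ?_
        rw [dividedMonomial_const_mul, sum_eq_of_mem_linkTypes hb, ha]
    _ = s ^ (k - 1) / (k - 1).factorial * ((k - 1).factorial * (dividedMonomial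
          (balancedDensity k r a) a * (1 + a i₀ / (r * a i₀ + 1 : ℕ) *
            ∑ i ∈ univ.erase i₀, ((r * a i + 1 : ℕ) : ℝ) / (a i + 1 : ℕ)))) := by
        rw [sum_dividedMonomial_linkTypes hpos, hcoef]
        field_simp
    _ ≤ s ^ (k - 1) / (k - 1).factorial * gThr k r :=
        mul_le_mul_of_nonneg_left hi₀ (by positivity)

end PlusType

section MinusType

variable {V ι : Type*} [DecidableEq ι]

/-- Off `W`, every edge has `a j` vertices in class `j`, or one fewer if its colour is `j`. -/
def IsMinusType (H : Finset (Finset V)) (W : Finset V) (c : Finset V → ι) (cl : V → ι)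
    (a : ι → ℕ) : Prop :=
  ∀ e ∈ H, Disjoint e W → profile cl e + Pi.single (c e) 1 = a

/-- The type `a` with one vertex of class `i` and one vertex of class `j` removed. -/
def removePair (a : ι → ℕ) (i j : ι) : ι → ℕ := a - (Pi.single i 1 + Pi.single j 1)

variable {a : ι → ℕ} {y : ι → ℝ}

lemma removePair_add (ha : ∀ j, 2 ≤ a j) (i j : ι) :
    removePair a i j + (Pi.single i 1 + Pi.single j 1) = a := by
  refine tsub_add_cancel_of_le fun l => ?_
  have := ha l
  simp only [Pi.add_apply, Pi.single_apply]
  split_ifs <;> omega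

lemma removePair_eq_removePair_iff (ha : ∀ j, 2 ≤ a j) {i j i' j' : ι} :
    removePair a i j = removePair a i' j' ↔ i = i' ∧ j = j' ∨ i = j' ∧ j = i' := by
  constructor
  · intro heq
    have h := (removePair_add ha i j).trans (removePair_add ha i' j').symm
    rw [heq] at h
    simpa [Pi.single_add_single_eq_single_add_single] using add_left_cancel h
  · rintro (⟨rfl, rfl⟩ | ⟨rfl, rfl⟩)
    · rfl
    · rw [removePair, removePair, add_comm]

variable [Fintype ι]

lemma sum_removePair (ha : ∀ j, 2 ≤ a j) (i j : ι) :
    ∑ l, removePair a i j l + 2 = ∑ l, a l := by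
  conv_rhs => rw [← removePair_add ha i j]
  simp [sum_add_distrib]

lemma dividedMonomial_removePair_le (hy : ∀ j, 0 < y j) (ha : ∀ j, 2 ≤ a j) {i j : ι}
    (hij : i ≠ j) : dividedMonomial y (removePair a i j) ≤
      dividedMonomial y (removePair a i i) + dividedMonomial y (removePair a j j) := by
  have hsub (l : ι) :
      dividedMonomial y (a - Pi.single l 1) = dividedMonomial y a * (a l / y l) := by
    have := dividedMonomial_sub_single y (b := a) (i := l) (by have := ha l; omega)
    have := (hy l).ne'
    field_simp
    assumption
  have hpair (l m : ι) : dividedMonomial y (removePair a l m) =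
      dividedMonomial y a * (a l / y l) * ((a - Pi.single l 1 : ι → ℕ) m / y m) := by
    have hne : (a - Pi.single l 1 : ι → ℕ) m ≠ 0 := by
      have := ha m
      simp only [Pi.sub_apply, Pi.single_apply]
      split_ifs <;> omega
    rw [removePair, tsub_add_eq_tsub_tsub, ← hsub, mul_div_assoc', eq_div_iff (hy m).ne',
      dividedMonomial_sub_single y hne]
  have hsquare (l : ι) : dividedMonomial y a * ((a l / y l) ^ 2 / 2) ≤
      dividedMonomial y (removePair a l l) := by
    have hl : (2 : ℝ) ≤ a l := mod_cast ha l
    rw [hpair, mul_assoc]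
    refine mul_le_mul_of_nonneg_left ?_ (dividedMonomial_nonneg (fun j => (hy j).le) a)
    rw [sq, mul_div_assoc]
    have := hy l
    rw [Pi.sub_apply, Pi.single_eq_same, Nat.cast_sub (by have := ha l; omega), div_div,
      mul_comm (y l), ← div_div]
    gcongr
    push_cast
    linarith
  have hD := dividedMonomial_nonneg (fun j => (hy j).le) a
  have hmean := mul_le_mul_of_nonneg_left (two_mul_le_add_sq (a i / y i) (a j / y j)) hD
  rw [hpair, Pi.sub_apply, Pi.single_eq_of_ne hij.symm, tsub_zero]
  linarith [hsquare i, hsquare j]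

lemma sum_dividedMonomial_removePair_le (hy : ∀ j, 0 < y j) (ha : ∀ j, 2 ≤ a j) {m : ℕ}
    (hm : ∑ j, a j = m + 2) {i j l : ι} (hij : i ≠ j) (hil : i ≠ l) (hjl : j ≠ l) :
    dividedMonomial y (removePair a i j) + dividedMonomial y (removePair a i l) +
      dividedMonomial y (removePair a j l) ≤ 2 / 3 * ((∑ j, y j) ^ m / m.factorial) := by
  have hsum := sum_dividedMonomial_le (fun j => (hy j).le) (m := m) (B := {removePair a i j,
    removePair a i l, removePair a j l, removePair a i i, removePair a j j, removePair a l l}) (by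
      simp only [mem_insert, mem_singleton]
      rintro _ (rfl | rfl | rfl | rfl | rfl | rfl) <;>
        exact Nat.add_right_cancel ((sum_removePair ha _ _).trans hm))
  rw [sum_insert, sum_insert, sum_insert, sum_insert, sum_insert, sum_singleton] at hsum
  · linarith [dividedMonomial_removePair_le hy ha hij, dividedMonomial_removePair_le hy ha hil,
      dividedMonomial_removePair_le hy ha hjl]
  all_goals
    simp [removePair_eq_removePair_iff ha, hij, hil, hjl, hij.symm, hil.symm, hjl.symm]

variable [DecidableEq V] {k : ℕ} {H : Finset (Finset V)} {W : Finset V} {c : Finset V → ι}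
  {cl : V → ι}

omit [Fintype ι] in
lemma IsMinusType.profile_add_single (htype : IsMinusType H W c cl a) {v : V} (hv : v ∉ W)
    {T : Finset V} (hT : T ∈ linkAvoiding H W v) :
    profile cl T + (Pi.single (cl v) 1 + Pi.single (c (insert v T)) 1) = a := by
  obtain ⟨hvT, hTH, hTW⟩ := mem_linkAvoiding.1 hT
  rw [← htype _ hTH (disjoint_insert_left.2 ⟨hv, hTW⟩)]
  ext j
  simp [profile_insert cl hvT, Pi.single_apply, eq_comm, add_assoc]

omit [Fintype ι] in
lemma IsMinusType.profile_eq_removePair (htype : IsMinusType H W c cl a) {u v : V} (hu : u ∉ W)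
    (hv : v ∉ W) (huv : cl u ≠ cl v) {T : Finset V} (hT : T ∈ commonLinks H W u v) :
    profile cl T = removePair a (cl u) (cl v) := by
  obtain ⟨hTu, hTv⟩ := mem_inter.1 hT
  have htu := htype.profile_add_single hu hTu
  have htv := htype.profile_add_single hv hTv
  have hpair := add_left_cancel (htu.trans htv.symm)
  have hcol : cl u = c (insert v T) ∧ c (insert u T) = cl v := by
    simpa [Pi.single_add_single_eq_single_add_single, huv] using hpair
  rw [removePair, ← htu, hcol.2, add_tsub_cancel_right]

variable [Fintype V]

omit [Fintype ι] in
lemma IsMinusType.card_linkAvoiding_le (htype : IsMinusType H W c cl a) (hH : HyperUniform k H)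
    {v : V} (hv : v ∉ W) (ha : a (cl v) = 1) : (#(linkAvoiding H W v) : ℝ) ≤
      (Fintype.card V - profile cl univ (cl v)) ^ (k - 1) / (k - 1).factorial := by
  have hsub : linkAvoiding H W v ⊆ powersetCard (k - 1) ({u | cl u = cl v} : Finset V)ᶜ := by
    intro T hT
    have hv' := congrFun (htype.profile_add_single hv hT) (cl v)
    have hempty : profile cl T (cl v) = 0 := by
      simp only [Pi.add_apply, Pi.single_eq_same, ha] at hv'
      omega
    refine mem_powersetCard.2 ⟨fun u hu => ?_, hH.card_of_mem_link (mem_filter.1 hT).1⟩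
    simpa using filter_eq_empty_iff.1 (card_eq_zero.1 hempty) hu
  have hle : profile cl univ (cl v) ≤ Fintype.card V := card_le_univ _
  calc (#(linkAvoiding H W v) : ℝ)
      ≤ ((Fintype.card V - profile cl univ (cl v)).choose (k - 1) : ℕ) := by
        have := card_le_card hsub
        rw [card_powersetCard, card_compl] at this
        exact_mod_cast this
    _ ≤ _ := by
        rw [← Nat.cast_sub hle]
        exact Nat.choose_le_pow_div _ _

omit [Fintype V] [DecidableEq V] in
lemma card_add_card_add_card_le {α : Type*} [DecidableEq α] (A B C : Finset α) :
    #A + #B + #C ≤ #(A ∪ B ∪ C) + (#(A ∩ B) + #(A ∩ C) + #(B ∩ C)) := by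
  have hAB := card_union_add_card_inter A B
  have hABC := card_union_add_card_inter (A ∪ B) C
  have hinter := card_union_le (A ∩ C) (B ∩ C)
  rw [← union_inter_distrib_right] at hinter
  omega

lemma IsMinusType.sum_card_linkAvoiding_le (htype : IsMinusType H W c cl a)
    (hH : HyperUniform k H) (hk : 1 ≤ k) (ha : ∀ j, 2 ≤ a j) (hsum : ∑ j, a j = k + 1)
    (hcl : ∀ j, 0 < profile cl univ j) {u v w : V} (hu : u ∉ W) (hv : v ∉ W) (hw : w ∉ W)
    (huv : cl u ≠ cl v) (huw : cl u ≠ cl w) (hvw : cl v ≠ cl w) :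
    (#(linkAvoiding H W u) + #(linkAvoiding H W v) + #(linkAvoiding H W w) : ℝ) ≤
      5 / 3 * ((Fintype.card V : ℝ) ^ (k - 1) / (k - 1).factorial) := by
  have hunion : (#(linkAvoiding H W u ∪ linkAvoiding H W v ∪ linkAvoiding H W w) : ℝ) ≤
      (Fintype.card V : ℝ) ^ (k - 1) / (k - 1).factorial := by
    have hsub : linkAvoiding H W u ∪ linkAvoiding H W v ∪ linkAvoiding H W w ⊆
        powersetCard (k - 1) univ := by
      have hlink (x : V) : linkAvoiding H W x ⊆ powersetCard (k - 1) univ := fun T hT =>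
        mem_powersetCard.2 ⟨subset_univ T, hH.card_of_mem_link (mem_filter.1 hT).1⟩
      exact union_subset (union_subset (hlink u) (hlink v)) (hlink w)
    refine le_trans ?_ (Nat.choose_le_pow_div (k - 1) (Fintype.card V))
    simpa using card_le_card hsub
  have hinter {x y : V} (hx : x ∉ W) (hy : y ∉ W) (hxy : cl x ≠ cl y) :
      (#(linkAvoiding H W x ∩ linkAvoiding H W y) : ℝ) ≤
        dividedMonomial (fun j => (profile cl univ j : ℝ)) (removePair a (cl x) (cl y)) :=
    card_le_dividedMonomial fun T hT => htype.profile_eq_removePair hx hy hxy hT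
  have hpairs := sum_dividedMonomial_removePair_le (y := fun j => (profile cl univ j : ℝ))
    (fun j => mod_cast hcl j) ha (m := k - 1) (by omega) huv huw hvw
  have htotal : ∑ j, (profile cl univ j : ℝ) = Fintype.card V := mod_cast sum_profile cl univ
  rw [htotal] at hpairs
  have hincl := Nat.cast_le (α := ℝ).2 (card_add_card_add_card_le (linkAvoiding H W u)
    (linkAvoiding H W v) (linkAvoiding H W w))
  push_cast at hincl
  linarith [hinter hu hv huv, hinter hu hw huw, hinter hv hw hvw]

end MinusType

section Structure

variable {V ι : Type*} [DecidableEq ι] {k : ℕ} {H M : Finset (Finset V)} {W : Finset V}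
  {c : Finset V → ι} {cl : V → ι} {a : ι → ℕ}

lemma exists_notMem_eq_of_profile_ne_zero {e : Finset V} (he : Disjoint e W) {j : ι}
    (hj : profile cl e j ≠ 0) : ∃ v ∉ W, cl v = j := by
  obtain ⟨v, hv⟩ := card_ne_zero.1 hj
  exact ⟨v, disjoint_left.1 he (mem_filter.1 hv).1, (mem_filter.1 hv).2⟩

lemma exists_isPlusType_or_isMinusType [DecidableEq V] [Fintype ι] [Nontrivial ι]
    (hH : HyperUniform k H) (hk : 2 ≤ k) (hL : HasCommonLinks k H W)
    (hc : IsSwitchInvariant k H W fun e => (Pi.single (c e) 1 : ι → ℤ))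
    (hcol : ∀ i, ∃ e ∈ H, Disjoint e W ∧ c e = i) :
    ∃ (cl : V → ι) (a : ι → ℕ), ∑ j, a j = k - 1 ∧ IsPlusType H W c cl a ∨
      (∀ j, 1 ≤ a j) ∧ ∑ j, a j = k + 1 ∧ IsMinusType H W c cl a := by
  obtain ⟨cl, b, ε, h⟩ := exists_profile_eq_add_smul_single hH hk hL hc
  choose e he hW hce using hcol
  have hsum (i : ι) : ∑ j, profile cl (e i) j = k := by rw [sum_profile, hH _ (he i)]
  obtain ⟨i₀, -, -⟩ := exists_pair_ne ι
  obtain rfl | rfl := Int.units_eq_one_or ε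
  · have hb (j : ι) : ∃ m : ℕ, b j = m := by
      obtain ⟨i, hij⟩ := exists_ne j
      exact ⟨profile cl (e i) j, by simpa [hce, hij] using (h _ (he i) (hW i) j).symm⟩
    choose a ha using hb
    have htype : IsPlusType H W c cl a := fun f hf hfW => funext fun j => by
      have := h f hf hfW j
      simp only [ha, Units.val_one, one_mul] at this
      simp only [Pi.add_apply, Pi.single_apply, eq_comm (a := j)]
      exact_mod_cast this
    refine ⟨cl, a, Or.inl ⟨?_, htype⟩⟩
    have := hsum i₀
    simp only [htype _ (he i₀) (hW i₀), Pi.add_apply, sum_add_distrib, sum_pi_single', mem_univ,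
      if_true] at this
    omega
  · have hb (j : ι) : ∃ m : ℕ, b j = m + 1 :=
      ⟨profile cl (e j) j, by simp [h _ (he j) (hW j) j, hce]⟩
    choose a ha using hb
    have htype : IsMinusType H W c cl fun j => a j + 1 := fun f hf hfW => funext fun j => by
      have := h f hf hfW j
      simp only [ha, Units.val_neg, Units.val_one, neg_mul, one_mul] at this
      simp only [Pi.add_apply, Pi.single_apply, eq_comm (a := j)]
      zify
      linarith
    refine ⟨cl, fun j => a j + 1, Or.inr ⟨fun j => Nat.le_add_left 1 _, ?_, htype⟩⟩
    rw [← htype _ (he i₀) (hW i₀)]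
    simp [sum_add_distrib, hsum]

/-- With only two colours, exchanging the two classes turns the minus type into the plus type. -/
lemma IsMinusType.isPlusType_rev {c : Finset V → Fin 2} {cl : V → Fin 2} {a : Fin 2 → ℕ}
    (htype : IsMinusType H W c cl a) (ha : ∀ j, 1 ≤ a j) :
    IsPlusType H W c (fun v => (cl v).rev) fun j => a j.rev - 1 := fun e he heW => by
  ext j
  have hrev : profile (fun v => (cl v).rev) e j = profile cl e j.rev := by
    simp only [profile, Fin.rev_eq_iff]
  have hj := congrFun (htype e he heW) j.rev
  have := ha j.rev
  rw [hrev, Pi.add_apply]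
  generalize c e = i at *
  fin_cases i <;> fin_cases j <;> simp_all <;> omega

variable [Fintype V]

lemma IsPM.profile_univ (hM : IsPM H M) (cl : V → ι) (j : ι) :
    profile cl univ j = ∑ e ∈ M, profile cl e j := by
  classical
  rw [← hM.biUnion_eq_univ]
  exact profile_biUnion cl hM.isMatching.2 j

lemma IsPM.exists_disjoint_of_card_lt_profile (hM : IsPM H M) {i : ι}
    (hi : #W < profile c M i) : ∃ e ∈ H, Disjoint e W ∧ c e = i := by
  classical
  by_contra! hnone
  refine (hi.trans_le (card_le_card fun e he => ?_)).not_ge (hM.card_not_disjoint_le W)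
  obtain ⟨heM, hei⟩ := mem_filter.1 he
  exact mem_filter.2 ⟨heM, fun hd => hnone e (hM.1 heM) hd hei⟩

lemma IsPlusType.profile_univ_le (htype : IsPlusType H W c cl a) (hH : HyperUniform k H)
    (hM : IsPM H M) (j : ι) :
    profile cl univ j ≤ a j * #M + profile c M j + k * #W := by
  classical
  calc profile cl univ j = ∑ e ∈ M, profile cl e j := hM.profile_univ cl j
    _ ≤ ∑ e ∈ M, (a j + (if c e = j then 1 else 0) + if ¬ Disjoint e W then k else 0) := by
        refine sum_le_sum fun e he => ?_
        by_cases hd : Disjoint e W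
        · simp [htype e (hM.1 he) hd, Pi.single_apply, eq_comm]
        · have : profile cl e j ≤ k := (card_filter_le _ _).trans (hH e (hM.1 he)).le
          rw [if_pos hd]
          omega
    _ = a j * #M + profile c M j + k * #{e ∈ M | ¬ Disjoint e W} := by
        rw [sum_add_distrib, sum_add_distrib, ← sum_filter _ fun _ => k, ← card_filter]
        simp [profile, mul_comm]
    _ ≤ _ := by gcongr; exact hM.card_not_disjoint_le W

lemma IsMinusType.card_le_profile_univ_add (htype : IsMinusType H W c cl a) (hM : IsPM H M)
    {j : ι} (ha : a j = 1) : #M ≤ profile cl univ j + profile c M j + #W := by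
  classical
  calc #M = ∑ e ∈ M, 1 := card_eq_sum_ones M
    _ ≤ ∑ e ∈ M, (profile cl e j + (if c e = j then 1 else 0) +
          if ¬ Disjoint e W then 1 else 0) := by
        refine sum_le_sum fun e he => ?_
        by_cases hd : Disjoint e W
        · have := congrFun (htype e (hM.1 he) hd) j
          simp only [Pi.add_apply, Pi.single_apply, ha, eq_comm (a := j)] at this
          omega
        · simp [hd]
    _ = profile cl univ j + profile c M j + #{e ∈ M | ¬ Disjoint e W} := by
        rw [sum_add_distrib, sum_add_distrib, ← card_filter, ← card_filter, hM.profile_univ]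
        rfl
    _ ≤ _ := by gcongr; exact hM.card_not_disjoint_le W

end Structure

section LowDegree

variable {V : Type*} [Fintype V] [DecidableEq V] {k r : ℕ} {H M : Finset (Finset V)}
  {W : Finset V} {c : Finset V → Fin r} {cl : V → Fin r} {a : Fin r → ℕ} {x : ℝ}

lemma IsPlusType.exists_card_linkAvoiding_le (htype : IsPlusType H W c cl a)
    (hH : HyperUniform k H) (hM : IsPM H M) (hk : 1 ≤ k) (hr : 1 ≤ r) (ha : ∑ j, a j = k - 1)
    (hcol : ∀ i, ∃ e ∈ H, Disjoint e W ∧ c e = i) (hx : 0 ≤ x)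
    (hbal : ∀ j, (profile c M j + k * #W : ℝ) ≤ (1 + x) * (Fintype.card V / (r * k))) :
    ∃ v ∉ W, (#(linkAvoiding H W v) : ℝ) ≤
      ((1 + x) * Fintype.card V) ^ (k - 1) / (k - 1).factorial * gThr k r := by
  have hMk : (#M * k : ℝ) = Fintype.card V := mod_cast hM.card_mul hH
  have hclass (j : Fin r) : (profile cl univ j : ℝ) ≤
      (1 + x) * Fintype.card V * balancedDensity k r a j := by
    calc (profile cl univ j : ℝ) ≤ a j * #M + (profile c M j + k * #W) := by
          exact_mod_cast (htype.profile_univ_le hH hM j).trans_eq (add_assoc _ _ _)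
      _ ≤ (1 + x) * (a j * #M) + (1 + x) * (Fintype.card V / (r * k)) :=
          add_le_add (le_mul_of_one_le_left (by positivity) (by linarith)) (hbal j)
      _ = _ := by
          rw [← hMk]
          unfold balancedDensity
          push_cast
          field_simp
  obtain ⟨i, hi⟩ := htype.exists_forall_card_linkAvoiding_le hk hr ha (by positivity) hclass
  obtain ⟨e, he, heW, hei⟩ := hcol i
  obtain ⟨v, hv, hcl⟩ := exists_notMem_eq_of_profile_ne_zero (cl := cl) (j := i) heW
    (by simp [htype e he heW, hei])
  exact ⟨v, hv, hi v hv hcl⟩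

lemma IsMinusType.exists_card_linkAvoiding_le_of_eq_one (htype : IsMinusType H W c cl a)
    (hH : HyperUniform k H) (hM : IsPM H M) (hk : 1 ≤ k) (hr : 2 ≤ r) {j : Fin r} (ha : a j = 1)
    (hcol : ∀ i, ∃ e ∈ H, Disjoint e W ∧ c e = i) (hx : 0 ≤ x)
    (hbal : (profile c M j + k * #W : ℝ) ≤ (1 + x) * (Fintype.card V / (r * k))) :
    ∃ v ∉ W, (#(linkAvoiding H W v) : ℝ) ≤
      ((1 + x) * Fintype.card V) ^ (k - 1) / (k - 1).factorial * gThr k r := by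
  have hMk : (#M * k : ℝ) = Fintype.card V := mod_cast hM.card_mul hH
  have hclass : (Fintype.card V : ℝ) - profile cl univ j ≤
      (1 + x) * Fintype.card V * balancedDensity k r (Pi.single j (k - 1)) j := by
    have hone : (#M : ℝ) ≤ profile cl univ j + profile c M j + #W :=
      mod_cast htype.card_le_profile_univ_add hM ha
    have hW : (#W : ℝ) ≤ k * #W := le_mul_of_one_le_left (by positivity) (mod_cast hk)
    have hk' : (1 : ℝ) ≤ k := mod_cast hk
    calc (Fintype.card V : ℝ) - profile cl univ j
        ≤ (k - 1) * #M + (profile c M j + k * #W) := by rw [← hMk]; linarith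
      _ ≤ (1 + x) * ((k - 1) * #M) + (1 + x) * (Fintype.card V / (r * k)) :=
          add_le_add (le_mul_of_one_le_left (mul_nonneg (by linarith) (by positivity))
            (by linarith)) hbal
      _ = _ := by
          rw [← hMk, balancedDensity, Pi.single_eq_same]
          push_cast [Nat.cast_sub hk]
          field_simp
  have : Nontrivial (Fin r) := Fin.nontrivial_iff_two_le.2 hr
  obtain ⟨i, hij⟩ := exists_ne j
  obtain ⟨e, he, heW, hei⟩ := hcol i
  have hej := congrFun (htype e he heW) j
  simp only [Pi.add_apply, hei, Pi.single_eq_of_ne hij.symm, ha, add_zero] at hej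
  obtain ⟨v, hv, rfl⟩ := exists_notMem_eq_of_profile_ne_zero heW (hej.trans_ne one_ne_zero)
  refine ⟨v, hv, (htype.card_linkAvoiding_le hH hv ha).trans ?_⟩
  have hle : profile cl univ (cl v) ≤ Fintype.card V := card_le_univ _
  rw [div_mul_eq_mul_div]
  refine div_le_div_of_nonneg_right ?_ (by positivity)
  calc _ ≤ ((1 + x) * Fintype.card V * balancedDensity k r _ (cl v)) ^ (k - 1) :=
        pow_le_pow_left₀ (sub_nonneg.2 (mod_cast hle)) hclass _
    _ ≤ _ := by
        rw [mul_pow]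
        exact mul_le_mul_of_nonneg_left (balancedDensity_single_pow_le_gThr hk _) (by positivity)

lemma IsMinusType.exists_card_linkAvoiding_le_of_two_le (htype : IsMinusType H W c cl a)
    (hH : HyperUniform k H) (hk : 1 ≤ k) (hr : 3 ≤ r) (ha : ∀ j, 2 ≤ a j)
    (hsum : ∑ j, a j = k + 1) (hcol : ∀ i, ∃ e ∈ H, Disjoint e W ∧ c e = i) :
    ∃ v ∉ W, (#(linkAvoiding H W v) : ℝ) ≤
      (Fintype.card V : ℝ) ^ (k - 1) / (k - 1).factorial * (5 / 9) := by
  have hvertex (j : Fin r) : ∃ v ∉ W, cl v = j := by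
    obtain ⟨e, he, heW, -⟩ := hcol j
    refine exists_notMem_eq_of_profile_ne_zero heW fun h0 => ?_
    have hej := congrFun (htype e he heW) j
    have := ha j
    simp only [Pi.add_apply, Pi.single_apply, h0] at hej
    split_ifs at hej <;> omega
  choose v hv hcl using hvertex
  have hpos (j : Fin r) : 0 < profile cl univ j :=
    card_pos.2 ⟨v j, mem_filter.2 ⟨mem_univ _, hcl j⟩⟩
  have hne {i j : Fin r} (hij : i ≠ j) : cl (v i) ≠ cl (v j) := by rwa [hcl, hcl]
  have hthree := htype.sum_card_linkAvoiding_le hH hk ha hsum hpos (hv ⟨0, by omega⟩)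
    (hv ⟨1, by omega⟩) (hv ⟨2, by omega⟩) (hne (by simp)) (hne (by simp)) (hne (by simp))
  by_contra! hlarge
  linarith [hlarge _ (hv ⟨0, by omega⟩), hlarge _ (hv ⟨1, by omega⟩), hlarge _ (hv ⟨2, by omega⟩)]

/-- The dichotomy of edge types bounds the degree of some vertex: `5 / 9` comes from the minus type
with all `a j ≥ 2`, and `gThr k r` from the two other cases. -/
lemma exists_card_linkAvoiding_le (hH : HyperUniform k H) (hk : 2 ≤ k) (hr : 2 ≤ r)
    (hL : HasCommonLinks k H W)
    (hc : IsSwitchInvariant k H W fun e => (Pi.single (c e) 1 : Fin r → ℤ)) (hM : IsPM H M)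
    (hcol : ∀ i, ∃ e ∈ H, Disjoint e W ∧ c e = i) (hx : 0 ≤ x)
    (hbal : ∀ j, (profile c M j + k * #W : ℝ) ≤ (1 + x) * (Fintype.card V / (r * k))) :
    ∃ v ∉ W, (#(linkAvoiding H W v) : ℝ) ≤
      ((1 + x) * Fintype.card V) ^ (k - 1) / (k - 1).factorial * max (5 / 9) (gThr k r) := by
  set s := (1 + x) * (Fintype.card V : ℝ)
  have hgThr {v : V} (h : (#(linkAvoiding H W v) : ℝ) ≤
      s ^ (k - 1) / (k - 1).factorial * gThr k r) :
      (#(linkAvoiding H W v) : ℝ) ≤ s ^ (k - 1) / (k - 1).factorial * max (5 / 9) (gThr k r) :=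
    h.trans (mul_le_mul_of_nonneg_left (le_max_right _ _) (by positivity))
  have : Nontrivial (Fin r) := Fin.nontrivial_iff_two_le.2 hr
  obtain ⟨cl, a, ⟨ha, htype⟩ | ⟨ha, hsum, htype⟩⟩ :=
    exists_isPlusType_or_isMinusType hH hk hL hc hcol
  · obtain ⟨v, hv, hle⟩ := htype.exists_card_linkAvoiding_le hH hM (by omega) (by omega) ha hcol
      hx hbal
    exact ⟨v, hv, hgThr hle⟩
  by_cases hone : ∃ j, a j = 1
  · obtain ⟨j, hj⟩ := hone
    obtain ⟨v, hv, hle⟩ := htype.exists_card_linkAvoiding_le_of_eq_one hH hM (by omega) hr hj hcol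
      hx (hbal j)
    exact ⟨v, hv, hgThr hle⟩
  obtain rfl | hr3 : r = 2 ∨ 3 ≤ r := by omega
  · have ha' : ∑ j : Fin 2, (a j.rev - 1) = k - 1 := by
      have := ha 0
      have := ha 1
      simp only [Fin.sum_univ_two] at hsum ⊢
      simp only [show Fin.rev (0 : Fin 2) = 1 from rfl, show Fin.rev (1 : Fin 2) = 0 from rfl]
      omega
    obtain ⟨v, hv, hle⟩ := (htype.isPlusType_rev ha).exists_card_linkAvoiding_le hH hM (by omega)
      (by omega) ha' hcol hx hbal
    exact ⟨v, hv, hgThr hle⟩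
  · have htwo (j : Fin r) : 2 ≤ a j := (ha j).lt_of_ne' fun hj => hone ⟨j, hj⟩
    obtain ⟨v, hv, hle⟩ := htype.exists_card_linkAvoiding_le_of_two_le hH (by omega) hr3 htwo hsum
      hcol
    refine ⟨v, hv, hle.trans ?_⟩
    have hn : (Fintype.card V : ℝ) ≤ s := le_mul_of_one_le_left (by positivity) (by linarith)
    gcongr
    exact le_max_left _ _

end LowDegree

section Switches

variable {V ι : Type*} [DecidableEq V] [DecidableEq ι] {k : ℕ} {H : Finset (Finset V)}
  {c : Finset V → ι}

lemma IsSwitch.biUnion_nonempty {i : ι} {p : Finset (Finset V) × Finset (Finset V)}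
    (hH : HyperUniform k H) (hk : 1 ≤ k) (hp : IsSwitch k H c i p) :
    (p.1.biUnion id).Nonempty := by
  obtain ⟨e, he⟩ := card_pos.1 ((Nat.zero_le _).trans_lt hp.profile_lt)
  have hep := (mem_filter.1 he).1
  have hcard := hH e (hp.isMatching_snd.1 hep)
  obtain ⟨v, hv⟩ := card_pos.1 (hk.trans hcard.ge)
  rw [hp.biUnion_eq]
  exact ⟨v, mem_biUnion.2 ⟨e, hep, hv⟩⟩

lemma exists_isSwitchInvariant [Fintype ι] (hH : HyperUniform k H) (hk : 1 ≤ k)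
    (c : Finset V → ι) {N : ℕ}
    (hN : ∀ (i : ι) (F : Finset (Finset (Finset V) × Finset (Finset V))),
      (∀ p ∈ F, IsSwitch k H c i p) →
      (F : Set (Finset (Finset V) × Finset (Finset V))).PairwiseDisjoint
        (fun p => p.1.biUnion id) → #F ≠ N) :
    ∃ W : Finset V, #W ≤ Fintype.card ι * (N * (k * (k + 1))) ∧
      IsSwitchInvariant k H W fun e => (Pi.single (c e) 1 : ι → ℤ) := by
  choose F hF hd hmax using fun i => exists_pairwiseDisjoint_card_eq_or_maximal
    (IsSwitch k H c i) (fun p => p.1.biUnion id) (fun _ hp => hp.biUnion_nonempty hH hk) N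
  replace hmax (i : ι) := (hmax i).resolve_left (hN i _ (hF i) (hd i))
  set W := univ.biUnion fun i => (F i).biUnion fun p => p.1.biUnion id
  have hnot (i : ι) (A B : Finset (Finset V)) (hAW : Disjoint (A.biUnion id) W) :
      ¬ IsSwitch k H c i (A, B) := fun h =>
    (hmax i).2 _ h (hAW.mono_right (subset_biUnion_of_mem
      (fun i => (F i).biUnion fun p => p.1.biUnion id) (mem_univ i)))
  refine ⟨W, ?_, fun A B hA hB hAB hAW hcard => funext fun j => ?_⟩
  · refine card_biUnion_le_card_mul _ _ _ fun i _ => ?_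
    refine (card_biUnion_le_card_mul _ _ _ fun p hp => (hF i p hp).card_biUnion_le).trans ?_
    gcongr
    exact (hmax i).1.le
  · rw [sum_single_apply, sum_single_apply, Nat.cast_inj]
    refine le_antisymm (not_lt.1 fun hlt => ?_) (not_lt.1 fun hlt => ?_)
    · exact hnot j B A (hAB ▸ hAW) ⟨hB, hA, hAB.symm, hAB ▸ hcard, hlt⟩
    · exact hnot j A B hAW ⟨hA, hB, hAB, hcard, hlt⟩

end Switches

section Covering

open Filter

lemma HyperUniform.lt_one_of_mul_choose_lt_hdeg {V : Type*} [Fintype V] [DecidableEq V] {k : ℕ}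
    {H : Finset (Finset V)} (hH : HyperUniform k H) {D : ℝ} {v : V}
    (hD : D * ((Fintype.card V - 1).choose (k - 1) : ℝ) < hdeg H v) : D < 1 := by
  have hle : (hdeg H v : ℝ) ≤ ((Fintype.card V - 1).choose (k - 1) : ℝ) :=
    mod_cast hH.hdeg_le_choose_card v
  by_contra! hD1
  linarith [le_mul_of_one_le_left (Nat.cast_nonneg ((Fintype.card V - 1).choose (k - 1))) hD1]

lemma eventually_exists_isMatching_biUnion_eq_compl {k : ℕ} (hk : 3 ≤ k) {η β : ℝ} (hη : 0 < η)
    (hβ : 2 * k * β ≤ η) :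
    ∀ᶠ n : ℕ in atTop, k ∣ n → ∀ H : Finset (Finset (Fin n)), HyperUniform k H →
      (∀ v, (fThr k + η) * ((n - 1).choose (k - 1) : ℝ) < hdeg H v) →
      ∀ S : Finset (Fin n), k ∣ #S → (#S : ℝ) ≤ β * n →
        ∃ M, IsMatching H M ∧ M.biUnion id = Sᶜ := by
  obtain ⟨N, hN⟩ := eventually_atTop.1 (eventually_exists_isPM k (half_pos hη))
  filter_upwards [eventually_ge_atTop (2 * N), eventually_ge_atTop k]
    with n hNn hkn hdvd H hH hd S hS hSβ
  have hk3 : (3 : ℝ) ≤ k := mod_cast hk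
  have hn : (0 : ℝ) < n := mod_cast (by omega : 0 < n)
  have hf := five_ninths_le_fThr hk
  have hη1 : fThr k + η < 1 := hH.lt_one_of_mul_choose_lt_hdeg (v := (⟨0, by omega⟩ : Fin n))
    (by simpa only [Fintype.card_fin] using hd _)
  have hcompl : #Sᶜ = n - #S := by rw [card_compl, Fintype.card_fin]
  have hhalf : (2 * #S : ℝ) ≤ n :=
    calc (2 * #S : ℝ) ≤ 2 * (β * n) := by gcongr
      _ ≤ 1 * n := by rw [← mul_assoc]; gcongr; nlinarith
      _ = n := one_mul _
  have hhalf' : 2 * #S ≤ n := mod_cast hhalf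
  refine hH.exists_isMatching_biUnion_eq_compl
    (hN #Sᶜ (by omega) (hcompl ▸ Nat.dvd_sub hdvd hS)) fun v _ => ?_
  have hlink := hH.lt_card_linkAvoiding (X := S) (v := v) (by omega)
    (by rwa [Fintype.card_fin]) (by simpa only [Fintype.card_fin] using hd v)
    (by simpa only [Fintype.card_fin] using hSβ)
  rw [Fintype.card_fin] at hlink
  calc (fThr k + η / 2) * ((#Sᶜ - 1).choose (k - 1) : ℝ)
      ≤ (fThr k + η - k * β) * ((n - 1).choose (k - 1) : ℝ) := by
        gcongr
        · linarith
        · linarith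
        · omega
    _ ≤ #(linkAvoiding H S v) := hlink.le

lemma eventually_exists_isPM_profile_add_card_le {ι : Type*} [DecidableEq ι] {k : ℕ} (hk : 3 ≤ k)
    {η t : ℝ} (hη : 0 < η) (ht : 8 * k ^ 3 * t ≤ η) :
    ∀ᶠ n : ℕ in atTop, k ∣ n → ∀ H : Finset (Finset (Fin n)), HyperUniform k H →
      (∀ v, (fThr k + η) * ((n - 1).choose (k - 1) : ℝ) < hdeg H v) →
      ∀ (c : Finset (Fin n) → ι) (i : ι)
        (F : Finset (Finset (Finset (Fin n)) × Finset (Finset (Fin n)))),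
        (∀ p ∈ F, IsSwitch k H c i p) →
        (F : Set (Finset (Finset (Fin n)) × Finset (Finset (Fin n)))).PairwiseDisjoint
          (fun p => p.1.biUnion id) → (#F : ℝ) ≤ 2 * t * n →
        ∃ M M', IsPM H M ∧ IsPM H M' ∧ profile c M i + #F ≤ profile c M' i := by
  filter_upwards [eventually_exists_isMatching_biUnion_eq_compl hk (β := 4 * k ^ 2 * t) hη
    (by linarith)] with n hn hdvd H hH hd c i F hF hFd hFt
  have hcard : (#(F.biUnion fun p => p.1.biUnion id) : ℝ) ≤ 4 * k ^ 2 * t * n := by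
    have hk1 : (1 : ℝ) ≤ k := mod_cast (by omega : 1 ≤ k)
    calc (#(F.biUnion fun p => p.1.biUnion id) : ℝ) ≤ #F * (k * (k + 1)) :=
          mod_cast card_biUnion_le_card_mul _ _ _ fun p hp => (hF p hp).card_biUnion_le
      _ ≤ 2 * t * n * (k * (k + k)) := by gcongr; exact (Nat.cast_nonneg _).trans hFt
      _ = _ := by ring
  have hdvd' : k ∣ #(F.biUnion fun p => p.1.biUnion id) := by
    rw [card_biUnion hFd]
    exact dvd_sum fun p hp => ⟨_, ((hF p hp).isMatching_fst.card_biUnion hH).trans (mul_comm _ _)⟩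
  obtain ⟨M₀, hM₀, hcover⟩ := hn hdvd H hH hd _ hdvd' hcard
  exact exists_isPM_profile_add_card_le hH (by omega) hF hFd hM₀ hcover

end Covering

section Rigid

variable {V : Type*} [Fintype V] [DecidableEq V] {k : ℕ} {H M : Finset (Finset V)} {W : Finset V}

lemma HyperUniform.hasCommonLinks (hH : HyperUniform k H) (hk : 2 ≤ k) (hkV : k ≤ Fintype.card V)
    {D β : ℝ} (hd : ∀ v, D * ((Fintype.card V - 1).choose (k - 1) : ℝ) < hdeg H v)
    (hW : #W + (4 * k ^ 2 + 1) ≤ β * Fintype.card V) (hD : 1 / 2 ≤ D - k * β) :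
    HasCommonLinks k H W := by
  intro u v X hX
  have hhalf (w x : V) : (Fintype.card V - 1).choose (k - 1) <
      2 * #(linkAvoiding H (insert w (W ∪ X)) x) := by
    have hcard : #(insert w (W ∪ X)) ≤ #W + (4 * k ^ 2 + 1) :=
      (card_insert_le _ _).trans (by have := card_union_le W X; omega)
    have hlink := hH.lt_card_linkAvoiding hk hkV (hd x)
      ((mod_cast hcard : (#(insert w (W ∪ X)) : ℝ) ≤ #W + (4 * k ^ 2 + 1)).trans hW)
    have : ((Fintype.card V - 1).choose (k - 1) : ℝ) <
        2 * #(linkAvoiding H (insert w (W ∪ X)) x) := by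
      linarith [mul_le_mul_of_nonneg_right hD
        (Nat.cast_nonneg (α := ℝ) ((Fintype.card V - 1).choose (k - 1)))]
    exact_mod_cast this
  exact hH.commonLinks_nonempty (hhalf v u) (hhalf u v)

lemma one_add_pow_mul_one_add_le {m : ℕ} {x η : ℝ} (hx : 0 ≤ x) (hη : η ≤ 1)
    (hxη : 8 * (m * x) ≤ η) : (1 + x) ^ m * (1 + η / 8) ≤ 1 + η / 2 := by
  have hη0 : 0 ≤ η := le_trans (by positivity) hxη
  calc (1 + x) ^ m * (1 + η / 8) ≤ Real.exp x ^ m * Real.exp (η / 8) := by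
        gcongr
        · linarith [Real.add_one_le_exp x]
        · linarith [Real.add_one_le_exp (η / 8)]
    _ = Real.exp (m * x + η / 8) := by rw [← Real.exp_nat_mul, ← Real.exp_add]
    _ ≤ Real.exp (η / 4) := Real.exp_le_exp.2 (by linarith)
    _ ≤ 1 + η / 2 := by
        have hexp := Real.abs_exp_sub_one_le (x := η / 4) (by rw [abs_of_nonneg] <;> linarith)
        rw [abs_of_nonneg (by positivity : 0 ≤ η / 4)] at hexp
        linarith [le_abs_self (Real.exp (η / 4) - 1)]

lemma mul_pow_div_factorial_mul_le {m : ℕ} {n C x η P Q : ℝ} (hn : 0 ≤ n) (hC : 0 ≤ C)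
    (hx : 0 ≤ x) (hη : η ≤ 1) (hxη : 8 * (m * x) ≤ η) (hQP : Q ≤ P) (hP0 : 0 ≤ P)
    (hP1 : P ≤ 1) (hpow : n ^ m / m.factorial ≤ (1 + η / 8) * C) :
    ((1 + x) * n) ^ m / m.factorial * Q ≤ (P + η / 2) * C := by
  have hη0 : 0 ≤ η := le_trans (by positivity) hxη
  calc ((1 + x) * n) ^ m / m.factorial * Q ≤ ((1 + x) * n) ^ m / m.factorial * P := by gcongr
    _ = (1 + x) ^ m * (n ^ m / m.factorial) * P := by rw [mul_pow, mul_div_assoc]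
    _ ≤ (1 + x) ^ m * ((1 + η / 8) * C) * P := by gcongr
    _ = (1 + x) ^ m * (1 + η / 8) * (C * P) := by ring
    _ ≤ (1 + η / 2) * (C * P) := by gcongr; exact one_add_pow_mul_one_add_le hx hη hxη
    _ = (P + η / 2 * P) * C := by ring
    _ ≤ (P + η / 2) * C := by gcongr; exact mul_le_of_le_one_right (by positivity) hP1

variable {r : ℕ} {c : Finset V → Fin r} {P η t ω : ℝ}

omit [DecidableEq V] in
lemma IsPM.card_lt_profile (hM : IsPM H M) (hH : HyperUniform k H) (hk : 1 ≤ k)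
    (hW : #W ≤ ω * Fintype.card V) (hωt : r * k * ω + r * t < 1)
    (hV : 0 < Fintype.card V) (ht : 0 ≤ t)
    (hM' : ∀ j, (profile c M j : ℝ) ≤ Fintype.card V / (r * k) * (1 + t)) (i : Fin r) :
    #W < profile c M i := by
  have hr0 : (0 : ℝ) < r := mod_cast i.pos
  have hk0 : (0 : ℝ) < k := mod_cast hk
  have hMk : (#M * k : ℝ) = Fintype.card V := mod_cast hM.card_mul hH
  have hlow := sub_mul_le_profile (f := c) M hM' i
  set p := (Fintype.card V : ℝ) / (r * k) with hp
  have hp0 : 0 < p := by positivity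
  have hVp : (Fintype.card V : ℝ) = p * (r * k) := by rw [hp]; field_simp
  have hMp : (#M : ℝ) = p * r := by
    rw [hVp] at hMk
    exact mul_right_cancel₀ hk0.ne' (by linarith)
  rw [Fintype.card_fin, hMp] at hlow
  have : (#W : ℝ) < profile c M i :=
    calc (#W : ℝ) ≤ p * (r * k * ω) := by rw [hVp] at hW; linarith
      _ < p * (1 - r * t) := by gcongr; linarith
      _ ≤ p * r - (r - 1) * (p * (1 + t)) := by nlinarith [mul_nonneg hp0.le ht]
      _ ≤ _ := hlow
  exact_mod_cast this

lemma exists_le_profile_of_isSwitchInvariant (hH : HyperUniform k H) (hk : 2 ≤ k) (hr : 2 ≤ r)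
    (hM : IsPM H M) (hkV : k ≤ Fintype.card V) (hP : max (5 / 9) (gThr k r) ≤ P) (ht : 0 ≤ t)
    (hη : 8 * (k * (r * k ^ 2 * ω + r * t)) ≤ η)
    (hd : ∀ v, (P + η) * ((Fintype.card V - 1).choose (k - 1) : ℝ) < hdeg H v)
    (hpow : (Fintype.card V : ℝ) ^ (k - 1) / (k - 1).factorial ≤
      (1 + η / 8) * ((Fintype.card V - 1).choose (k - 1) : ℝ))
    (hW : #W ≤ ω * Fintype.card V) (hω : 4 * k ^ 2 + 1 ≤ ω * Fintype.card V)
    (hc : IsSwitchInvariant k H W fun e => (Pi.single (c e) 1 : Fin r → ℤ)) :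
    ∃ j, Fintype.card V / (r * k) * (1 + t) ≤ (profile c M j : ℝ) := by
  by_contra! hsmall
  have hr1 : (1 : ℝ) ≤ r := mod_cast (by omega : 1 ≤ r)
  have hk1 : (1 : ℝ) ≤ k := mod_cast (by omega : 1 ≤ k)
  have hV : 0 < Fintype.card V := by omega
  have : Nonempty V := Fintype.card_pos_iff.1 hV
  have hP0 : 5 / 9 ≤ P := (le_max_left _ _).trans hP
  have hη1 : P + η < 1 := hH.lt_one_of_mul_choose_lt_hdeg (hd (Classical.arbitrary V))
  have hω0 : 0 < ω := pos_of_mul_pos_left (lt_of_lt_of_le (by positivity) hω) (Nat.cast_nonneg _)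
  set x := r * k ^ 2 * ω + r * t with hx
  have hx0 : 0 ≤ x := by positivity
  have hrkω : r * k * ω + r * t ≤ x := by rw [hx]; gcongr; exact le_self_pow₀ hk1 two_ne_zero
  have hxkx : x ≤ k * x := le_mul_of_one_le_left hx0 hk1
  have hkω : k * ω ≤ k * x :=
    mul_le_mul_of_nonneg_left ((le_mul_of_one_le_left hω0.le
      (one_le_mul_of_one_le_of_one_le hr1 hk1)).trans (by nlinarith)) (by positivity)
  have hL : HasCommonLinks k H W := hH.hasCommonLinks hk hkV hd (β := 2 * ω)
    (by linarith) (by linarith)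
  have hcol (i : Fin r) : ∃ e ∈ H, Disjoint e W ∧ c e = i :=
    hM.exists_disjoint_of_card_lt_profile (hM.card_lt_profile hH (by omega) hW (by linarith) hV ht
      (fun j => (hsmall j).le) i)
  have hbal (j : Fin r) : (profile c M j + k * #W : ℝ) ≤
      (1 + x) * (Fintype.card V / (r * k)) := by
    calc (profile c M j + k * #W : ℝ)
        ≤ Fintype.card V / (r * k) * (1 + t) + k * (ω * Fintype.card V) := by
          gcongr; exact (hsmall j).le
      _ = (1 + (r * k ^ 2 * ω + t)) * (Fintype.card V / (r * k)) := by field_simp; ring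
      _ ≤ _ := by rw [hx]; gcongr; exact le_mul_of_one_le_left ht hr1
  obtain ⟨v, -, hv⟩ := exists_card_linkAvoiding_le hH hk hr hL hc hM hcol hx0 hbal
  have hlow := hH.lt_card_linkAvoiding hk hkV (hd v) hW
  have hup := mul_pow_div_factorial_mul_le (Nat.cast_nonneg _) (Nat.cast_nonneg _) hx0
    (by linarith) (hη.trans' (by gcongr; omega)) hP (by linarith) (by linarith) hpow
  linarith [lt_of_mul_lt_mul_right (hlow.trans_le (hv.trans hup)) (Nat.cast_nonneg _)]

omit [DecidableEq V] in
lemma exists_isPM_le_profile_of_profile_add_le {M' : Finset (Finset V)} {i : Fin r} {N : ℕ}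
    (hH : HyperUniform k H) (hk : 1 ≤ k) (hM : IsPM H M) (hM' : IsPM H M') (ht : 0 ≤ t)
    (hN : t * Fintype.card V ≤ N) (hMM' : profile c M i + N ≤ profile c M' i) :
    ∃ M, IsPM H M ∧ ∃ j, (Fintype.card V : ℝ) / (r * k) * (1 + t) ≤ profile c M j := by
  by_contra! hsmall
  have hlow := sub_mul_le_profile (f := c) M (fun j => (hsmall M hM j).le) i
  have hup := hsmall M' hM' i
  have hMM'' : (profile c M i + N : ℝ) ≤ profile c M' i := mod_cast hMM'
  have hr0 : (0 : ℝ) < r := mod_cast i.pos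
  have hk0 : (0 : ℝ) < k := mod_cast hk
  have hMk : (#M * k : ℝ) = Fintype.card V := mod_cast hM.card_mul hH
  have hMN : t * #M ≤ N := hN.trans' (by
    rw [← hMk]; gcongr; exact le_mul_of_one_le_right (by positivity) (mod_cast hk))
  have hB : r * (Fintype.card V / (r * k) * (1 + t)) = #M * (1 + t) := by
    rw [← hMk]; field_simp
  rw [Fintype.card_fin] at hlow
  linarith

lemma exists_isPM_le_profile {n : ℕ} (hH : HyperUniform k H) (hk : 2 ≤ k) (hr : 2 ≤ r)
    (hV : Fintype.card V = n) (hkn : k ≤ n) (hP : max (5 / 9) (gThr k r) ≤ P) (ht : 0 ≤ t)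
    (hη : 40 * r ^ 2 * k ^ 5 * t ≤ η)
    (hd : ∀ v, (P + η) * ((n - 1).choose (k - 1) : ℝ) < hdeg H v)
    (hpow : (n : ℝ) ^ (k - 1) / (k - 1).factorial ≤
      (1 + η / 8) * ((n - 1).choose (k - 1) : ℝ))
    (htn : 1 ≤ t * n)
    (hswitch : ∀ (i : Fin r) (F : Finset (Finset (Finset V) × Finset (Finset V))),
      (∀ p ∈ F, IsSwitch k H c i p) →
      (F : Set (Finset (Finset V) × Finset (Finset V))).PairwiseDisjoint
        (fun p => p.1.biUnion id) → (#F : ℝ) ≤ 2 * t * n →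
      ∃ M M', IsPM H M ∧ IsPM H M' ∧ profile c M i + #F ≤ profile c M' i) :
    ∃ M, IsPM H M ∧ ∃ i, (n : ℝ) / (r * k) * (1 + t) ≤ profile c M i := by
  subst hV
  have hN := Nat.ceil_lt_add_one (show 0 ≤ t * Fintype.card V by positivity)
  set N := ⌈t * Fintype.card V⌉₊
  have hN2 : (N : ℝ) ≤ 2 * t * Fintype.card V := by linarith
  have hr1 : (1 : ℝ) ≤ r := mod_cast (by omega : 1 ≤ r)
  have hk1 : (1 : ℝ) ≤ k := mod_cast (by omega : 1 ≤ k)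
  by_cases hfam : ∃ (i : Fin r) (F : Finset (Finset (Finset V) × Finset (Finset V))),
      (∀ p ∈ F, IsSwitch k H c i p) ∧
      (F : Set (Finset (Finset V) × Finset (Finset V))).PairwiseDisjoint
        (fun p => p.1.biUnion id) ∧ #F = N
  · obtain ⟨i, F, hF, hFd, hcard⟩ := hfam
    obtain ⟨M, M', hM, hM', hMM'⟩ := hswitch i F hF hFd (by rwa [hcard])
    exact exists_isPM_le_profile_of_profile_add_le hH (by omega) hM hM' ht
      (hcard ▸ Nat.le_ceil _) hMM'
  · push Not at hfam
    obtain ⟨W, hW, hc⟩ := exists_isSwitchInvariant hH (by omega) c hfam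
    obtain ⟨M, -, hM, -⟩ := hswitch ⟨0, by omega⟩ ∅ (by simp) (by simp)
      (by rw [card_empty, Nat.cast_zero]; positivity)
    refine ⟨M, hM, exists_le_profile_of_isSwitchInvariant hH hk hr hM hkn hP ht ?_ hd hpow
      (ω := 4 * r * k ^ 2 * t) ?_ ?_ hc⟩
    · have hrk : r * k * t ≤ r ^ 2 * k ^ 5 * t := by
        gcongr
        · exact le_self_pow₀ hr1 two_ne_zero
        · exact le_self_pow₀ hk1 (by norm_num)
      linarith
    · rw [Fintype.card_fin] at hW
      calc (#W : ℝ) ≤ r * (N * (k * (k + 1))) := mod_cast hW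
        _ ≤ r * (2 * t * Fintype.card V * (k * (k + k))) := by gcongr
        _ = _ := by ring
    · have hr2 : (2 : ℝ) ≤ r := mod_cast hr
      calc (4 * k ^ 2 + 1 : ℝ) ≤ 4 * k ^ 2 + 4 * k ^ 2 := by linarith [one_le_pow₀ (n := 2) hk1]
        _ = 4 * 2 * k ^ 2 * 1 := by ring
        _ ≤ 4 * r * k ^ 2 * (t * Fintype.card V) := by gcongr
        _ = _ := by ring

end Rigid

theorem discrepancy_main (k r : ℕ) (hk : 3 ≤ k) (hr : 2 ≤ r) :
    ∃ γ : ℝ, 0 < γ ∧ ∀ η : ℝ, 0 < η → ∃ n₀ : ℕ, ∀ n : ℕ, n₀ ≤ n → k ∣ n →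
      ∀ H : Finset (Finset (Fin n)), HyperUniform k H →
        (∀ v : Fin n, (max (fThr k) (gThr k r) + η) * (((n - 1).choose (k - 1) : ℕ) : ℝ)
            < (hdeg H v : ℝ)) →
        ∀ c : Finset (Fin n) → Fin r,
          ∃ M, IsPM H M ∧ ∃ i : Fin r,
            (n : ℝ) / ((r : ℝ) * (k : ℝ)) * (1 + γ * η) ≤
              ((M.filter (fun e => c e = i)).card : ℝ) := by
  refine ⟨1 / (40 * r ^ 2 * k ^ 5), by positivity, fun η hη => Filter.eventually_atTop.1 ?_⟩
  set t : ℝ := 1 / (40 * r ^ 2 * k ^ 5) * η with ht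
  have ht0 : 0 < t := by positivity
  have htη : 40 * r ^ 2 * k ^ 5 * t = η := by rw [ht]; field_simp
  have htk : 8 * k ^ 3 * t ≤ η :=
    calc 8 * k ^ 3 * t = 8 * 1 ^ 2 * k ^ 3 * t := by ring
      _ ≤ 40 * r ^ 2 * k ^ 5 * t := by gcongr <;> norm_cast <;> omega
      _ = η := htη
  filter_upwards [eventually_exists_isPM_profile_add_card_le (ι := Fin r) hk hη htk,
    eventually_pow_div_factorial_le (k - 1) (ε := η / 8) (by positivity),
    Filter.eventually_ge_atTop k,
    tendsto_natCast_atTop_atTop.eventually_ge_atTop (1 / t)]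
    with n hswitch hpow hkn hn hdvd H hH hd c
  have hf (v : Fin n) : (fThr k + η) * ((n - 1).choose (k - 1) : ℝ) < hdeg H v :=
    (hd v).trans_le' (by gcongr; exact le_max_left _ _)
  exact exists_isPM_le_profile hH (by omega) hr (Fintype.card_fin n) hkn
    (max_le_max_right _ (five_ninths_le_fThr hk)) ht0.le htη.le hd hpow ((div_le_iff₀' ht0).1 hn)
    (hswitch hdvd H hH hf c)
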